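/- (Schlage-Puchta) Assume the Riemann Hypothesis. Then for every real T > 2, the number of sign changes of π(x) − Li(x) on (2, T) exceeds log(T)/e^{e^{16.7}} − 1: for any natural number N with N ≤ log(T)/e^{e^{16.7}} − 1, there exist points x₀ < x₁ < ⋯ < x_N in (2, T) with (π(x_i) − Li(x_i))·(π(x_{i+1}) − Li(x_{i+1})) < 0 for all 0 ≤ i < N. -/

import Mathlib

open Real Filter Set

/-- `Li(x) = ∫₂ˣ dt/log t`. -/
noncomputable def Li (x : ℝ) : ℝ := ∫ t in (2:ℝ)..x, 1 / Real.log t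
/-- `π(x)`: the number of primes `p ≤ x`. -/
noncomputable def primePi (x : ℝ) : ℕ := Nat.card {p : ℕ | p.Prime ∧ (p : ℝ) ≤ x}


namespace SP

open Metric

/-- dividing out a single zero of an entire function -/
lemma single_factor (ρ : ℂ) (n : ℕ) : ∀ g : ℂ → ℂ, Differentiable ℂ g → analyticOrderAt g ρ = n →
    ∃ h : ℂ → ℂ, Differentiable ℂ h ∧ h ρ ≠ 0 ∧ ∀ z, g z = (z - ρ) ^ n * h z := by
  induction n with
  | zero =>
    intro g hg hn
    refine ⟨g, hg, ?_, by simp⟩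
    have := (hg.analyticAt ρ).analyticOrderAt_eq_zero.mp (by simpa using hn)
    exact this
  | succ n ih =>
    intro g hg hn
    have hg0 : g ρ = 0 := by
      by_contra h
      rw [(hg.analyticAt ρ).analyticOrderAt_eq_zero.mpr h] at hn
      exact absurd hn (by exact_mod_cast (Nat.succ_ne_zero n).symm)
    have hd : Differentiable ℂ (dslope g ρ) := by
      rw [← differentiableOn_univ]
      exact (Complex.differentiableOn_dslope univ_mem).mpr hg.differentiableOn
    have heq : g = (fun z => z - ρ) * dslope g ρ := by
      funext z
      have := sub_smul_dslope g ρ z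
      simp only [smul_eq_mul, hg0, sub_zero] at this
      simp [this]
    have h1 : analyticOrderAt (fun z : ℂ => z - ρ) ρ = 1 := by
      have hA : AnalyticAt ℂ (fun z : ℂ => z - ρ) ρ := by fun_prop
      rw [show (1 : ℕ∞) = ((1 : ℕ) : ℕ∞) from rfl, hA.analyticOrderAt_eq_natCast]
      exact ⟨fun _ => 1, analyticAt_const, by simp, by simp⟩
    have h2 : analyticOrderAt (dslope g ρ) ρ = n := by
      rw [heq, analyticOrderAt_mul (by fun_prop) (hd.analyticAt ρ), h1] at hn
      push_cast at hn
      rw [add_comm] at hn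
      exact (ENat.add_right_injective_of_ne_top (n := 1) (by simp)) (by simpa [add_comm] using hn)
    obtain ⟨h, hh, hρ, hz⟩ := ih _ hd h2
    refine ⟨h, hh, hρ, fun z => ?_⟩
    rw [show g z = (z - ρ) * dslope g ρ z from congrFun heq z, hz, pow_succ]
    ring

lemma multi_factor (f : ℂ → ℂ) (hf : Differentiable ℂ f) (h0 : f 0 ≠ 0) (S : Finset ℂ) 
    (hS : ∀ ρ ∈ S, f ρ = 0) :
    ∃ g : ℂ → ℂ, Differentiable ℂ g ∧ (∀ ρ ∈ S, g ρ ≠ 0) ∧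
      ∀ z, f z = (∏ ρ ∈ S, (1 - z / ρ) ^ (analyticOrderNatAt f ρ)) * g z := by
  classical
  induction S using Finset.induction_on with
  | empty => exact ⟨f, hf, by simp, by simp⟩
  | insert ρ S hρ ih =>
    obtain ⟨g, hg, hgS, hfg⟩ := ih (fun r hr => hS r (Finset.mem_insert_of_mem hr))
    have hne : ∀ r ∈ insert ρ S, r ≠ 0 := by
      intro r hr h; rw [h] at hr; exact h0 (hS _ hr)
    set P : ℂ → ℂ := fun z => ∏ r ∈ S, (1 - z / r) ^ (analyticOrderNatAt f r) with hP
    have hPd : Differentiable ℂ P := by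
      rw [hP]; fun_prop
    have hPρ : P ρ ≠ 0 := by
      rw [hP]
      refine Finset.prod_ne_zero_iff.mpr fun r hr => pow_ne_zero _ ?_
      have hr0 := hne r (Finset.mem_insert_of_mem hr)
      intro h
      have : ρ = r := by
        field_simp at h
        rw [mul_zero] at h
        exact (sub_eq_zero.mp h).symm
      exact hρ (this ▸ hr)
    have hfe : f = P * g := by funext z; simpa [hP] using hfg z
    have hord : analyticOrderAt f ρ = analyticOrderAt g ρ := by
      conv_lhs => rw [hfe]
      rw [analyticOrderAt_mul (hPd.analyticAt ρ) (hg.analyticAt ρ),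
        (hPd.analyticAt ρ).analyticOrderAt_eq_zero.mpr hPρ, zero_add]
    have hfA : AnalyticOnNhd ℂ f univ := fun z _ => hf.analyticAt z
    have htop : analyticOrderAt f ρ ≠ ⊤ := by
      refine hfA.analyticOrderAt_ne_top_of_isPreconnected (x := 0) isPreconnected_univ (mem_univ _)
        (mem_univ _) ?_
      rw [(hf.analyticAt 0).analyticOrderAt_eq_zero.mpr h0]; simp
    have hn : analyticOrderAt g ρ = (analyticOrderNatAt f ρ : ℕ) := by
      rw [← hord]; exact (ENat.coe_toNat htop).symm
    obtain ⟨h, hh, hhρ, hgz⟩ := single_factor ρ _ g hg hn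
    set n := analyticOrderNatAt f ρ
    have hρ0 : ρ ≠ 0 := hne ρ (Finset.mem_insert_self _ _)
    refine ⟨fun z => (-ρ) ^ n * h z, by fun_prop, ?_, ?_⟩
    · intro r hr
      refine mul_ne_zero (pow_ne_zero _ (by simpa using hρ0)) ?_
      rcases Finset.mem_insert.mp hr with rfl | hr
      · exact hhρ
      · intro h'
        exact hgS r hr (by rw [hgz, h', mul_zero])
    · intro z
      rw [Finset.prod_insert hρ, hfg z, hgz z]
      have : (z - ρ) ^ n = (1 - z / ρ) ^ n * (-ρ) ^ n := by
        rw [← mul_pow]; congr 1; field_simp; ring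
      rw [this]; ring

lemma zeros_finite (f : ℂ → ℂ) (hf : Differentiable ℂ f) (h0 : f 0 ≠ 0) (R : ℝ) :
    {ρ : ℂ | f ρ = 0 ∧ ‖ρ‖ ≤ R}.Finite := by
  have hfA : AnalyticOnNhd ℂ f univ := fun z _ => hf.analyticAt z
  have h := hfA.preimage_zero_mem_codiscrete h0
  have h2 := mem_codiscrete'.mp h
  have : (closedBall (0:ℂ) R ∩ (f ⁻¹' {0})).Finite := by
    apply ((isCompact_closedBall (0:ℂ) R).inter_right _).finite
    · have hdisc : IsDiscrete (f ⁻¹' {0}) := by simpa using h2.2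
      exact hdisc.mono inter_subset_right
    · simpa using h2.1
  refine this.subset fun z hz => ?_
  simpa using ⟨hz.2, hz.1⟩

/-- finset of zeros of norm at most `R` -/
noncomputable def ZR (f : ℂ → ℂ) (R : ℝ) : Finset ℂ := by
  classical
  exact if h : {ρ : ℂ | f ρ = 0 ∧ ‖ρ‖ ≤ R}.Finite then h.toFinset else ∅

lemma mem_ZR (f : ℂ → ℂ) (hf : Differentiable ℂ f) (h0 : f 0 ≠ 0) (R : ℝ) (ρ : ℂ) :
    ρ ∈ ZR f R ↔ f ρ = 0 ∧ ‖ρ‖ ≤ R := by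
  have := zeros_finite f hf h0 R
  simp only [ZR, this, dite_true]
  simp

/-- log-derivative oscillation for zero-free function -/
lemma logDeriv_osc (g : ℂ → ℂ) (hg : Differentiable ℂ g) (R M : ℝ) (hR : 0 < R) (hM : 0 < M)
    (hz : ∀ z ∈ ball (0:ℂ) R, g z ≠ 0) (hb : ∀ z ∈ ball (0:ℂ) R, ‖g z‖ ≤ ‖g 0‖ * Real.exp M)
    (z w : ℂ) (hzR : ‖z‖ ≤ R / 8) (hwR : ‖w‖ ≤ R / 8) :
    ‖logDeriv g z - logDeriv g w‖ ≤ 64 * M / R ^ 2 * ‖z - w‖ := by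
  have hld : DifferentiableOn ℂ (logDeriv g) (ball 0 R) := by
    intro x hx
    have hA : DifferentiableAt ℂ (fun x => deriv g x / g x) x :=
      ((hg.analyticAt x).deriv.differentiableAt).div (hg x) (hz x hx)
    exact hA.differentiableWithinAt
  obtain ⟨L, hL0, hL⟩ := hld.isExactOn_ball.with_val_at 0 0
  have hLd : DifferentiableOn ℂ L (ball 0 R) := fun x hx =>
    (hL x hx).differentiableAt.differentiableWithinAt
  have hconst : ∀ x ∈ ball (0:ℂ) R, g x * Complex.exp (-L x) = g 0 := by
    intro x hx
    have key : ∀ y ∈ ball (0:ℂ) R, HasDerivAt (fun y => g y * Complex.exp (-L y)) 0 y := by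
      intro y hy
      have h1 := (hg y).hasDerivAt
      have h2 := (hL y hy).neg.cexp
      have h3 := h1.mul h2
      have h4 : logDeriv g y = deriv g y / g y := rfl
      have h5 := hz y hy
      have h6 : deriv g y * Complex.exp ((-L) y) + g y * (Complex.exp ((-L) y) * -logDeriv g y)
          = 0 := by
        rw [h4]
        field_simp
        try ring
      rw [h6] at h3
      exact h3
    have := (convex_ball (0:ℂ) R).is_const_of_fderivWithin_eq_zero (𝕜 := ℂ)
      (f := fun y => g y * Complex.exp (-L y))
      (fun y hy => (key y hy).differentiableAt.differentiableWithinAt)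
      (fun y hy => by
        rw [fderivWithin_of_isOpen isOpen_ball hy]
        have := (key y hy).hasFDerivAt.fderiv
        rw [this]; ext; simp) hx (mem_ball_self hR)
    simpa [hL0] using this
  have hg0 : g 0 ≠ 0 := hz 0 (mem_ball_self hR)
  have hre : MapsTo L (ball 0 R) {z | z.re ≤ M} := by
    intro x hx
    have h1 := hconst x hx
    have h2 : ‖g x‖ = ‖g 0‖ * Real.exp (L x).re := by
      have : g x = g 0 * Complex.exp (L x) := by
        rw [← h1, mul_assoc, ← Complex.exp_add]; simp
      rw [this, norm_mul, Complex.norm_exp]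
    have h3 := hb x hx
    rw [h2] at h3
    have := le_of_mul_le_mul_left h3 (norm_pos_iff.mpr hg0)
    exact Real.exp_le_exp.mp this
  have hLb : ∀ x, ‖x‖ ≤ R / 2 → ‖L x‖ ≤ 2 * M := by
    intro x hx
    have h := Complex.borelCaratheodory_zero hM hLd hre hR (z := x)
      (by simp; linarith) hL0
    refine h.trans ?_
    rw [div_le_iff₀ (by linarith)]
    nlinarith
  have hL' : ∀ x, ‖x‖ ≤ R / 4 → ‖logDeriv g x‖ ≤ 8 * M / R := by
    intro x hx
    have hsub : closedBall x (R/4) ⊆ ball 0 R := by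
      intro y hy
      simp only [mem_closedBall, dist_eq_norm, mem_ball, sub_zero] at hy ⊢
      have := norm_sub_norm_le y x
      linarith
    have := Complex.norm_deriv_le_of_forall_mem_sphere_norm_le (c := x) (R := R/4) (C := 2 * M)
      (f := L) (by linarith) (hLd.diffContOnCl_ball hsub) (fun y hy => hLb y (by
        simp only [mem_sphere, dist_eq_norm] at hy
        have := norm_sub_norm_le y x
        linarith))
    rw [(hL x (by simp; linarith)).deriv] at this
    refine this.trans (le_of_eq ?_)
    field_simp; ring
  have hL'' : ∀ x ∈ closedBall (0:ℂ) (R/8), ‖deriv (logDeriv g) x‖ ≤ 64 * M / R ^ 2 := by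
    intro x hx
    simp only [mem_closedBall, dist_zero_right] at hx
    have hsub : closedBall x (R/8) ⊆ ball 0 R := by
      intro y hy
      simp only [mem_closedBall, dist_eq_norm, mem_ball, sub_zero] at hy ⊢
      have := norm_sub_norm_le y x
      linarith
    have := Complex.norm_deriv_le_of_forall_mem_sphere_norm_le (c := x) (R := R/8) (C := 8 * M / R)
      (f := logDeriv g) (by linarith) (hld.diffContOnCl_ball hsub) (fun y hy => hL' y (by
        simp only [mem_sphere, dist_eq_norm] at hy
        have := norm_sub_norm_le y x
        linarith))
    refine this.trans (le_of_eq ?_)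
    field_simp; ring
  exact (convex_closedBall (0:ℂ) (R/8)).norm_image_sub_le_of_norm_deriv_le (fun x hx =>
    (hld x (by simp at hx ⊢; linarith)).differentiableAt
      (isOpen_ball.mem_nhds (by simp at hx ⊢; linarith))) hL'' (by simpa using hwR)
      (by simpa using hzR)

theorem hadamard_diff (f : ℂ → ℂ) (hf : Differentiable ℂ f) (h0 : f 0 ≠ 0) (C a : ℝ)
    (ha : a < 2) (hC : ∀ z, ‖f z‖ ≤ Real.exp (C * (1 + ‖z‖) ^ a)) (z w : ℂ)
    (hz : f z ≠ 0) (hw : f w ≠ 0) :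
    Tendsto (fun R : ℝ => ∑ ρ ∈ ZR f R, (analyticOrderNatAt f ρ : ℂ) * (1 / (z - ρ) - 1 / (w - ρ)))
      atTop (nhds (logDeriv f z - logDeriv f w)) := by
  set M : ℝ → ℝ := fun R => |C| * (1 + 4 * R) ^ a + |Real.log ‖f 0‖| + 1 with hM
  have hlim : Tendsto (fun R => 64 * M R / R ^ 2 * ‖z - w‖) atTop (nhds 0) := by
    have h1 : Tendsto (fun R : ℝ => (1 + 4 * R) ^ a / R ^ 2) atTop (nhds 0) := by
      have h2 : Tendsto (fun R : ℝ => (1 + 4 * R) ^ (-(2 - a)) * ((1 / R + 4) ^ 2)) atTop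
          (nhds (0 * (0 + 4) ^ 2)) := by
        refine Tendsto.mul ?_ ?_
        · refine (tendsto_rpow_neg_atTop (by linarith : 0 < 2 - a)).comp ?_
          exact tendsto_atTop_add_const_left _ _ (tendsto_id.const_mul_atTop (by norm_num))
        · refine Tendsto.pow (Tendsto.add ?_ tendsto_const_nhds) 2
          exact tendsto_const_nhds.div_atTop tendsto_id
      rw [zero_mul] at h2
      refine h2.congr' ?_
      filter_upwards [eventually_gt_atTop 0] with R hR
      rw [show -(2 - a) = a - 2 by ring, Real.rpow_sub (by positivity)]
      rw [Real.rpow_two]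
      field_simp
    have h2 : Tendsto (fun R : ℝ => (|Real.log ‖f 0‖| + 1) / R ^ 2) atTop (nhds 0) :=
      tendsto_const_nhds.div_atTop (tendsto_pow_atTop (by norm_num))
    have h3 := (((h1.const_mul |C|).add h2).const_mul 64).mul_const ‖z - w‖
    simp only [mul_zero, add_zero, zero_mul] at h3
    refine h3.congr fun R => ?_
    simp only [hM]; ring
  rw [tendsto_iff_norm_sub_tendsto_zero]
  refine squeeze_zero' (Eventually.of_forall fun _ => norm_nonneg _) ?_ hlim
  filter_upwards [eventually_ge_atTop 1, eventually_ge_atTop (8 * ‖z‖),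
    eventually_ge_atTop (8 * ‖w‖)] with R hR1 hRz hRw
  have hS : ∀ ρ ∈ ZR f R, f ρ = 0 ∧ ‖ρ‖ ≤ R := fun ρ hρ => (mem_ZR f hf h0 R ρ).mp hρ
  have hne : ∀ ρ ∈ ZR f R, ρ ≠ 0 := by
    intro ρ hρ h; subst h; exact h0 (hS _ hρ).1
  obtain ⟨g, hg, hgS, hfg⟩ := multi_factor f hf h0 (ZR f R) (fun ρ hρ => (hS ρ hρ).1)
  have hg0 : g 0 = f 0 := by rw [hfg 0]; simp
  have hgz : ∀ x ∈ ball (0:ℂ) R, g x ≠ 0 := by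
    intro x hx hgx
    have hfx : f x = 0 := by rw [hfg, hgx, mul_zero]
    exact hgS x ((mem_ZR f hf h0 R x).mpr ⟨hfx, by simp at hx; exact hx.le⟩) hgx
  have hmax : ∀ x ∈ closedBall (0:ℂ) (4 * R), ‖g x‖ ≤ Real.exp (|C| * (1 + 4 * R) ^ a) := by
    intro x hx
    have hcl : closure (ball (0:ℂ) (4 * R)) = closedBall 0 (4 * R) :=
      closure_ball _ (by linarith)
    refine Complex.norm_le_of_forall_mem_frontier_norm_le (U := ball (0:ℂ) (4*R)) isBounded_ball
      hg.diffContOnCl ?_ (by rw [hcl]; exact hx)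
    intro y hy
    rw [frontier_ball _ (by linarith)] at hy
    simp only [mem_sphere, dist_zero_right] at hy
    have h1 := hC y
    rw [hfg y, norm_mul, norm_prod, hy] at h1
    have h2 : 1 ≤ ∏ ρ ∈ ZR f R, ‖(1 - y / ρ) ^ analyticOrderNatAt f ρ‖ := by
      refine Finset.one_le_prod (fun ρ hρ => ?_)
      rw [norm_pow]
      refine one_le_pow₀ ?_
      have h3 : ‖y / ρ‖ - ‖(1:ℂ)‖ ≤ ‖1 - y / ρ‖ := by
        rw [norm_sub_rev]; exact norm_sub_norm_le _ _
      have h4 : 4 ≤ ‖y / ρ‖ := by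
        rw [norm_div, hy, le_div_iff₀ (norm_pos_iff.mpr (hne ρ hρ))]
        linarith [(hS ρ hρ).2]
      rw [norm_one] at h3; linarith
    calc ‖g y‖ ≤ (∏ ρ ∈ ZR f R, ‖(1 - y / ρ) ^ analyticOrderNatAt f ρ‖) * ‖g y‖ :=
          le_mul_of_one_le_left (norm_nonneg _) h2
      _ ≤ _ := h1
      _ ≤ _ := by
        refine Real.exp_le_exp.mpr ?_
        exact mul_le_mul_of_nonneg_right (le_abs_self _) (Real.rpow_nonneg (by linarith) _)
  have hb : ∀ x ∈ ball (0:ℂ) R, ‖g x‖ ≤ ‖g 0‖ * Real.exp (M R) := by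
    intro x hx
    refine (hmax x (by simp at hx ⊢; linarith)).trans ?_
    rw [hg0]
    have hf0 : 0 < ‖f 0‖ := norm_pos_iff.mpr h0
    calc Real.exp (|C| * (1 + 4 * R) ^ a) ≤ Real.exp (Real.log ‖f 0‖ + M R) := by
          refine Real.exp_le_exp.mpr ?_
          simp only [hM]
          linarith [neg_abs_le (Real.log ‖f 0‖)]
      _ = _ := by rw [Real.exp_add, Real.exp_log hf0]
  have hMp : 0 < M R := by
    simp only [hM]
    have : 0 ≤ (1 + 4 * R) ^ a := Real.rpow_nonneg (by linarith) _
    positivity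
  have hosc := logDeriv_osc g hg R (M R) (by linarith) hMp hgz hb z w (by linarith) (by linarith)
  have hdec : ∀ x, f x ≠ 0 → logDeriv f x =
      ∑ ρ ∈ ZR f R, (analyticOrderNatAt f ρ : ℂ) * (1 / (x - ρ)) + logDeriv g x := by
    intro x hx
    have hxP : (∏ ρ ∈ ZR f R, (1 - x / ρ) ^ analyticOrderNatAt f ρ) ≠ 0 ∧ g x ≠ 0 := by
      have := hx; rw [hfg x] at this; exact mul_ne_zero_iff.mp this
    have hfun : f = fun x => (∏ ρ ∈ ZR f R, (1 - x / ρ) ^ analyticOrderNatAt f ρ) * g x :=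
      funext hfg
    conv_lhs => rw [hfun]
    rw [logDeriv_mul x hxP.1 hxP.2 (by fun_prop) (hg x)]
    congr 1
    rw [logDeriv_prod (fun i hi => Finset.prod_ne_zero_iff.mp hxP.1 i hi) (by fun_prop)]
    refine Finset.sum_congr rfl fun ρ hρ => ?_
    rw [logDeriv_fun_pow (by fun_prop)]
    congr 1
    have hρ0 := hne ρ hρ
    have hxρ : x - ρ ≠ 0 := by
      intro h; rw [sub_eq_zero.mp h] at hx; exact hx (hS ρ hρ).1
    have hd : deriv (fun x : ℂ => 1 - x / ρ) x = -(1/ρ) := by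
      rw [deriv_const_sub, deriv_div_const]; simp
    rw [logDeriv_apply, hd]
    have : 1 - x / ρ = -(x - ρ)/ρ := by field_simp; ring
    rw [this]; field_simp
  rw [hdec z hz, hdec w hw]
  have : ∑ ρ ∈ ZR f R, (analyticOrderNatAt f ρ : ℂ) * (1 / (z - ρ) - 1 / (w - ρ)) =
      ∑ ρ ∈ ZR f R, (analyticOrderNatAt f ρ : ℂ) * (1 / (z - ρ)) -
      ∑ ρ ∈ ZR f R, (analyticOrderNatAt f ρ : ℂ) * (1 / (w - ρ)) := by
    rw [← Finset.sum_sub_distrib]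
    exact Finset.sum_congr rfl fun _ _ => by ring
  rw [this, norm_sub_rev]
  refine le_trans (le_of_eq ?_) hosc
  congr 1; ring

end SP


namespace SP

/-- The (doubled) Riemann xi function -/
noncomputable def xi (s : ℂ) : ℂ := s * (s - 1) * completedRiemannZeta₀ s + 1

lemma xi_diff : Differentiable ℂ xi := by
  unfold xi
  have := differentiable_completedZeta₀
  fun_prop

lemma xi_zero : xi 0 = 1 := by simp [xi]
lemma xi_one : xi 1 = 1 := by simp [xi]
lemma xi_zero_ne : xi 0 ≠ 0 := by simp [xi]

lemma xi_one_sub (s : ℂ) : xi (1 - s) = xi s := by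
  unfold xi; rw [completedRiemannZeta₀_one_sub]; ring

lemma xi_eq (s : ℂ) (h0 : s ≠ 0) (h1 : s ≠ 1) : xi s = s * (s - 1) * completedRiemannZeta s := by
  unfold xi
  rw [completedRiemannZeta_eq]
  have : (1 - s) ≠ 0 := sub_ne_zero.mpr h1.symm
  field_simp
  ring

lemma norm_Gamma_le (s : ℂ) (hs : 0 < s.re) : ‖Complex.Gamma s‖ ≤ Real.Gamma s.re := by
  rw [Complex.Gamma_eq_integral hs, Real.Gamma_eq_integral hs, Complex.GammaIntegral]
  refine (MeasureTheory.norm_integral_le_integral_norm _).trans (le_of_eq ?_)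
  refine MeasureTheory.setIntegral_congr_fun measurableSet_Ioi fun t ht => ?_
  simp only [norm_mul, Complex.norm_real, Real.norm_eq_abs, abs_of_pos (Real.exp_pos _)]
  rw [Complex.norm_cpow_eq_rpow_re_of_pos ht]
  simp

lemma Gamma_growth (x : ℝ) (hx : 2 ≤ x) : Real.Gamma x ≤ Real.exp (2 * (1 + x) ^ (3 / 2 : ℝ)) := by
  have h1 : Real.Gamma x ≤ Real.Gamma (⌈x⌉₊ + 1) :=
    Real.Gamma_strictMonoOn_Ici.monotoneOn (by simpa using hx)
      (by simp only [mem_Ici]; have := Nat.le_ceil x; linarith)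
      (by have := Nat.le_ceil x; linarith)
  rw [Real.Gamma_nat_eq_factorial] at h1
  have h2 : ((⌈x⌉₊.factorial : ℕ) : ℝ) ≤ (1 + x) ^ ((1 + x) : ℝ) := by
    have h3 : ((⌈x⌉₊.factorial : ℕ) : ℝ) ≤ (⌈x⌉₊ : ℝ) ^ ⌈x⌉₊ := by
      exact_mod_cast Nat.factorial_le_pow _
    refine h3.trans ?_
    have h4 : (⌈x⌉₊ : ℝ) ≤ 1 + x := by
      have := Nat.ceil_lt_add_one (by linarith : 0 ≤ x); linarith
    calc (⌈x⌉₊ : ℝ) ^ ⌈x⌉₊ ≤ (1 + x) ^ ⌈x⌉₊ := by gcongr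
      _ = (1 + x) ^ (⌈x⌉₊ : ℝ) := by rw [Real.rpow_natCast]
      _ ≤ _ := Real.rpow_le_rpow_of_exponent_le (by linarith) h4
  refine h1.trans (h2.trans ?_)
  have hp : 0 < 1 + x := by linarith
  rw [Real.rpow_def_of_pos hp]
  refine Real.exp_le_exp.mpr ?_
  have h5 : Real.log (1 + x) ≤ 2 * (1 + x) ^ (1/2 : ℝ) := by
    have := Real.log_le_rpow_div hp.le (by norm_num : (0:ℝ) < 1/2)
    linarith
  have h6 : (1 + x) ^ (3/2 : ℝ) = (1 + x) ^ (1/2:ℝ) * (1 + x) := by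
    rw [show (3/2:ℝ) = 1/2 + 1 by norm_num, Real.rpow_add hp, Real.rpow_one]
  rw [h6]
  nlinarith

lemma strip_bound : ∃ B : ℝ, 0 ≤ B ∧ ∀ s : ℂ, -4 ≤ s.re → s.re ≤ 4 → ‖completedRiemannZeta₀ s‖ ≤ B := by
  set P := HurwitzZeta.hurwitzEvenFEPair 0 with hP
  have hconv : ∀ s : ℂ, MellinConvergent P.f_modif s := fun s =>
    (P.isStrongFEPair_toStrongFEPair.hasMellin s).1
  have hn : ∀ s : ℂ, MeasureTheory.IntegrableOn (fun t : ℝ => t ^ (s.re - 1) * ‖P.f_modif t‖) (Ioi 0) := by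
    intro s
    have := (hconv s).norm
    refine MeasureTheory.IntegrableOn.congr_fun this (fun t ht => ?_) measurableSet_Ioi
    simp only [norm_smul]
    rw [Complex.norm_cpow_eq_rpow_re_of_pos ht]
    simp
  have ha := hn (-2)
  have hb := hn 2
  refine ⟨∫ t in Ioi (0:ℝ), (t ^ ((-2:ℂ).re - 1) * ‖P.f_modif t‖ + t ^ ((2:ℂ).re - 1) * ‖P.f_modif t‖), ?_, ?_⟩
  · refine MeasureTheory.setIntegral_nonneg measurableSet_Ioi fun t ht => ?_
    have : 0 < t := ht
    positivity
  · intro s h1 h2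
    have : completedRiemannZeta₀ s = P.Λ₀ (s / 2) / 2 := rfl
    rw [this, norm_div]
    have hΛ : ‖P.Λ₀ (s/2)‖ ≤ ∫ t in Ioi (0:ℝ), (t ^ ((-2:ℂ).re - 1) * ‖P.f_modif t‖ + t ^ ((2:ℂ).re - 1) * ‖P.f_modif t‖) := by
      rw [WeakFEPair.Λ₀, mellin]
      refine MeasureTheory.norm_integral_le_of_norm_le (ha.add hb) ?_
      refine (MeasureTheory.ae_restrict_iff' measurableSet_Ioi).mpr (Eventually.of_forall fun t ht => ?_)
      have ht0 : 0 < t := ht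
      rw [norm_smul, Complex.norm_cpow_eq_rpow_re_of_pos ht]
      rw [← add_mul]
      refine mul_le_mul_of_nonneg_right ?_ (norm_nonneg _)
      have hre : (s / 2 - 1).re = s.re / 2 - 1 := by simp
      rw [hre]
      rcases le_total t 1 with h | h
      · have : t ^ (s.re / 2 - 1) ≤ t ^ ((-2:ℂ).re - 1) := by
          refine Real.rpow_le_rpow_of_exponent_ge ht0 h ?_
          simp; linarith
        have := Real.rpow_nonneg ht0.le ((2:ℂ).re - 1)
        linarith
      · have : t ^ (s.re / 2 - 1) ≤ t ^ ((2:ℂ).re - 1) := by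
          refine Real.rpow_le_rpow_of_exponent_le h ?_
          simp; linarith
        have := Real.rpow_nonneg ht0.le ((-2:ℂ).re - 1)
        linarith
    have : ‖(2:ℂ)‖ = 2 := by simp
    rw [this]
    linarith [norm_nonneg (P.Λ₀ (s/2))]

lemma norm_zeta_le (s : ℂ) (hs : 2 ≤ s.re) : ‖riemannZeta s‖ ≤ 2 := by
  rw [zeta_eq_tsum_one_div_nat_add_one_cpow (by linarith)]
  have h2 : HasSum (fun n : ℕ => 1 / ((n:ℝ) + 1) ^ 2) (π ^ 2 / 6) := by
    have := (hasSum_nat_add_iff' 1).mpr hasSum_zeta_two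
    simpa using this
  refine (tsum_of_norm_bounded h2 fun n => ?_).trans ?_
  · rw [norm_div, norm_one]
    have : ‖((n:ℂ) + 1) ^ s‖ = ((n:ℝ) + 1) ^ s.re := by
      have := Complex.norm_cpow_eq_rpow_re_of_pos (by positivity : 0 < (n:ℝ) + 1) s
      push_cast at this; exact this
    rw [this]
    refine one_div_le_one_div_of_le (by positivity) ?_
    rw [← Real.rpow_two]
    exact Real.rpow_le_rpow_of_exponent_le (by linarith [(Nat.cast_nonneg n : (0:ℝ) ≤ n)]) hs
  · nlinarith [Real.pi_lt_d2, Real.pi_pos]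

lemma right_bound (s : ℂ) (hs : 4 ≤ s.re) :
    ‖xi s‖ ≤ Real.exp (6 * (1 + ‖s‖) ^ (3 / 2 : ℝ)) := by
  have h0 : s ≠ 0 := by rintro rfl; norm_num at hs
  have h1 : s ≠ 1 := by rintro rfl; norm_num at hs
  rw [xi_eq s h0 h1]
  have hG : Complex.Gammaℝ s ≠ 0 := Complex.Gammaℝ_ne_zero_of_re_pos (by linarith)
  have hΛ : completedRiemannZeta s = riemannZeta s * Complex.Gammaℝ s := by
    rw [riemannZeta_def_of_ne_zero h0]; field_simp
  rw [hΛ, Complex.Gammaℝ_def]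
  have hre : (s/2).re = s.re / 2 := by simp
  have hns : s.re ≤ ‖s‖ := Complex.re_le_norm s
  set X := 1 + ‖s‖
  have hX : 1 ≤ X := by have := norm_nonneg s; simp only [X]; linarith
  have g1 : ‖Complex.Gamma (s / 2)‖ ≤ Real.exp (2 * X ^ (3/2:ℝ)) := by
    refine (norm_Gamma_le _ (by rw [hre]; linarith)).trans ?_
    refine (Gamma_growth _ (by rw [hre]; linarith)).trans ?_
    refine Real.exp_le_exp.mpr ?_
    have : (1 + (s/2).re) ^ (3/2:ℝ) ≤ X ^ (3/2:ℝ) :=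
      Real.rpow_le_rpow (by rw [hre]; linarith) (by rw [hre]; simp only [X]; linarith) (by norm_num)
    linarith
  have g2 : ‖(π:ℂ) ^ (-s/2)‖ ≤ 1 := by
    rw [Complex.norm_cpow_eq_rpow_re_of_pos Real.pi_pos]
    refine Real.rpow_le_one_of_one_le_of_nonpos (by linarith [Real.pi_gt_three]) ?_
    simp; linarith
  have g3 := norm_zeta_le s (by linarith)
  have g4 : ‖s * (s - 1)‖ ≤ X ^ 2 := by
    rw [norm_mul]
    have : ‖s - 1‖ ≤ X := by
      refine (norm_sub_le _ _).trans ?_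
      simp [X, add_comm]
    nlinarith [norm_nonneg s, norm_nonneg (s-1)]
  have g5 : X ≤ X ^ (3/2:ℝ) := by
    conv_lhs => rw [← Real.rpow_one X]
    exact Real.rpow_le_rpow_of_exponent_le hX (by norm_num)
  have g6 : X ≤ Real.exp X := by linarith [Real.add_one_le_exp X]
  have g7 : (2:ℝ) ≤ Real.exp X := by linarith [Real.add_one_le_exp X]
  calc ‖s * (s - 1) * (riemannZeta s * (↑π ^ (-s / 2) * Complex.Gamma (s / 2)))‖
      = ‖s * (s-1)‖ * (‖riemannZeta s‖ * (‖(π:ℂ) ^ (-s/2)‖ * ‖Complex.Gamma (s/2)‖)) := by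
        rw [norm_mul, norm_mul (riemannZeta s), norm_mul (_ ^ _)]
    _ ≤ X ^ 2 * (2 * (1 * Real.exp (2 * X ^ (3/2:ℝ)))) := by gcongr
    _ ≤ (Real.exp X) ^ 2 * (Real.exp X * (1 * Real.exp (2 * X ^ (3/2:ℝ)))) := by
        gcongr
    _ = Real.exp (3 * X + 2 * X ^ (3/2:ℝ)) := by
        rw [← Real.exp_nat_mul, one_mul, ← Real.exp_add, ← Real.exp_add]; congr 1; push_cast; ring
    _ ≤ _ := by
        refine Real.exp_le_exp.mpr ?_
        linarith

lemma xi_growth : ∃ C : ℝ, ∀ s, ‖xi s‖ ≤ Real.exp (C * (1 + ‖s‖) ^ (3 / 2 : ℝ)) := by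
  obtain ⟨B, hB0, hB⟩ := strip_bound
  refine ⟨24 + B, fun s => ?_⟩
  have hX : 1 ≤ 1 + ‖s‖ := by linarith [norm_nonneg s]
  have hXp : 1 ≤ (1 + ‖s‖) ^ (3/2:ℝ) := Real.one_le_rpow hX (by norm_num)
  rcases le_total 4 s.re with h | h
  · refine (right_bound s h).trans (Real.exp_le_exp.mpr ?_)
    nlinarith
  rcases le_total (-4) s.re with h' | h'
  · have h1 := hB s h' h
    set X := 1 + ‖s‖
    have g4 : ‖s * (s - 1)‖ ≤ X ^ 2 := by
      rw [norm_mul]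
      have : ‖s - 1‖ ≤ X := by
        refine (norm_sub_le _ _).trans ?_
        simp [X, add_comm]
      nlinarith [norm_nonneg s, norm_nonneg (s-1)]
    have g5 : X ≤ X ^ (3/2:ℝ) := by
      conv_lhs => rw [← Real.rpow_one X]
      exact Real.rpow_le_rpow_of_exponent_le hX (by norm_num)
    have g6 : X ≤ Real.exp X := by linarith [Real.add_one_le_exp X]
    calc ‖xi s‖ ≤ ‖s * (s - 1)‖ * ‖completedRiemannZeta₀ s‖ + 1 := by
          unfold xi
          refine (norm_add_le _ _).trans ?_
          rw [norm_mul, norm_one]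
      _ ≤ X ^ 2 * B + X ^ 2 := by
          have : 1 ≤ X ^ 2 := one_le_pow₀ hX
          gcongr
      _ = X ^ 2 * (B + 1) := by ring
      _ ≤ (Real.exp X) ^ 2 * Real.exp B := by
          gcongr; exact Real.add_one_le_exp B
      _ = Real.exp (2 * X + B) := by
          rw [← Real.exp_nat_mul, ← Real.exp_add]; congr 1
      _ ≤ _ := by
          refine Real.exp_le_exp.mpr ?_
          nlinarith
  · rw [← xi_one_sub]
    refine (right_bound (1 - s) (by simp; linarith)).trans (Real.exp_le_exp.mpr ?_)
    have h1 : ‖1 - s‖ ≤ 1 + ‖s‖ := by simpa using norm_sub_le (1:ℂ) s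
    have h2 : (1 + ‖1 - s‖) ^ (3/2:ℝ) ≤ (2 * (1 + ‖s‖)) ^ (3/2:ℝ) :=
      Real.rpow_le_rpow (by positivity) (by linarith [norm_nonneg s]) (by norm_num)
    rw [Real.mul_rpow (by norm_num) (by linarith)] at h2
    have h3 : (2:ℝ) ^ (3/2:ℝ) ≤ 2 ^ (2:ℝ) :=
      Real.rpow_le_rpow_of_exponent_le (by norm_num) (by norm_num)
    have h4 : (2:ℝ) ^ (2:ℝ) = 4 := by norm_num
    rw [h4] at h3
    nlinarith

lemma xi_ne_zero_of_one_lt (s : ℂ) (hs : 1 < s.re) : xi s ≠ 0 := by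
  have h0 : s ≠ 0 := by rintro rfl; norm_num at hs
  have h1 : s ≠ 1 := by rintro rfl; norm_num at hs
  have hG : Complex.Gammaℝ s ≠ 0 := Complex.Gammaℝ_ne_zero_of_re_pos (by linarith)
  have hΛ : completedRiemannZeta s = riemannZeta s * Complex.Gammaℝ s := by
    rw [riemannZeta_def_of_ne_zero h0]; field_simp
  rw [xi_eq s h0 h1, hΛ]
  have := riemannZeta_ne_zero_of_one_lt_re hs
  have := sub_ne_zero.mpr h1
  positivity

lemma xi_zero_re (hRH : RiemannHypothesis) (ρ : ℂ) (h : xi ρ = 0) : ρ.re = 1 / 2 := by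
  have h0 : ρ ≠ 0 := by rintro rfl; rw [xi_zero] at h; exact one_ne_zero h
  have h1 : ρ ≠ 1 := by rintro rfl; rw [xi_one] at h; exact one_ne_zero h
  refine hRH ρ ?_ ?_ h1
  · rw [riemannZeta_def_of_ne_zero h0]
    rw [xi_eq ρ h0 h1] at h
    have : completedRiemannZeta ρ = 0 := by
      simpa [h0, sub_ne_zero.mpr h1] using h
    rw [this, zero_div]
  · rintro ⟨n, hn⟩
    rw [← xi_one_sub] at h
    refine xi_ne_zero_of_one_lt (1 - ρ) ?_ h
    rw [hn]; simp
    positivity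

lemma logDeriv_xi_one_sub (s : ℂ) : logDeriv xi (1 - s) = - logDeriv xi s := by
  have h : xi = fun s => xi (1 - s) := funext fun s => (xi_one_sub s).symm
  have h1 : deriv xi s = - deriv xi (1 - s) := by
    conv_lhs => rw [h]
    rw [deriv_comp_const_sub]
  rw [logDeriv_apply, logDeriv_apply, h1, xi_one_sub]; ring

lemma logDeriv_xi_one : logDeriv xi 1 = (((eulerMascheroniConstant - Real.log (4 * π)) / 2 + 1 : ℝ) : ℂ) := by
  have hd : HasDerivAt xi (completedRiemannZeta₀ 1) 1 := by
    have h1 : HasDerivAt (fun s : ℂ => s * (s - 1)) (1 * (1 - 1) + 1 * 1) 1 := 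
      (hasDerivAt_id (1:ℂ)).mul ((hasDerivAt_id (1:ℂ)).sub_const 1)
    have h2 := (h1.mul (differentiable_completedZeta₀ 1).hasDerivAt).add_const 1
    have h3 : (1 * (1 - 1) + 1 * 1) * completedRiemannZeta₀ 1 + 1 * (1 - 1) * deriv completedRiemannZeta₀ 1 = completedRiemannZeta₀ 1 := by ring
    rw [h3] at h2
    exact h2
  rw [logDeriv_apply, hd.deriv, xi_one, div_one, completedRiemannZeta₀_one]
  push_cast
  rw [Complex.ofReal_log (by positivity)]
  push_cast
  rfl

lemma logDeriv_xi (s : ℂ) (hs : 1 < s.re) : logDeriv xi s =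
    1 / (s - 1) + deriv riemannZeta s / riemannZeta s - Real.log π / 2 
      + Complex.digamma (s / 2 + 1) / 2 := by
  have h0 : s ≠ 0 := by rintro rfl; norm_num at hs
  have h1 : s ≠ 1 := by rintro rfl; norm_num at hs
  have h1' := sub_ne_zero.mpr h1
  have hev : xi =ᶠ[nhds s] fun s => (2 * (s - 1)) * (riemannZeta s * ((π:ℂ) ^ (-s / 2) * Complex.Gamma (s / 2 + 1))) := by
    have : {z : ℂ | 1 < z.re} ∈ nhds s := (isOpen_lt continuous_const Complex.continuous_re).mem_nhds hs
    filter_upwards [this] with z hz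
    have hz0 : z ≠ 0 := by rintro rfl; norm_num at hz
    have hz1 : z ≠ 1 := by rintro rfl; norm_num at hz
    have hG : Complex.Gammaℝ z ≠ 0 := Complex.Gammaℝ_ne_zero_of_re_pos (by have : 1 < z.re := hz; linarith)
    have hΛ : completedRiemannZeta z = riemannZeta z * Complex.Gammaℝ z := by
      rw [riemannZeta_def_of_ne_zero hz0]; field_simp
    rw [xi_eq z hz0 hz1, hΛ, Complex.Gammaℝ_def, Complex.Gamma_add_one _ (by simpa using hz0)]
    ring
  have hζ := riemannZeta_ne_zero_of_one_lt_re hs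
  have hζd := differentiableAt_riemannZeta h1
  have hπ : (π:ℂ) ≠ 0 := by exact_mod_cast Real.pi_pos.ne'
  have hre : 0 < (s / 2 + 1).re := by simp; linarith
  have hΓ : Complex.Gamma (s/2+1) ≠ 0 := Complex.Gamma_ne_zero_of_re_pos hre
  have hnm : ∀ m : ℕ, s / 2 + 1 ≠ -m := by
    intro m hm
    rw [hm] at hre
    simp at hre
    linarith [(Nat.cast_nonneg m : (0:ℝ) ≤ m)]
  have hΓd : HasDerivAt (fun s => Complex.Gamma (s/2+1)) (deriv Complex.Gamma (s/2+1) * (1/2)) s := by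
    have e1 := (Complex.differentiableAt_Gamma _ hnm).hasDerivAt
    have e2 : HasDerivAt (fun s : ℂ => s/2+1) (1/2) s := ((hasDerivAt_id s).div_const 2).add_const 1
    exact HasDerivAt.comp s e1 e2
  have hpd : HasDerivAt (fun s : ℂ => (π:ℂ) ^ (-s/2)) ((π:ℂ) ^ (-s/2) * Complex.log π * (-1/2)) s := by
    have e2 : HasDerivAt (fun s : ℂ => -s/2) (-1/2) s := ((hasDerivAt_id s).neg.div_const 2)
    exact e2.const_cpow (Or.inl hπ)
  have hpne : (π:ℂ) ^ (-s/2) ≠ 0 := by simp [Complex.cpow_eq_zero_iff, hπ]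
  have hld : logDeriv xi s = logDeriv (fun s => (2 * (s - 1)) * (riemannZeta s * ((π:ℂ) ^ (-s / 2) * Complex.Gamma (s / 2 + 1)))) s := by
    rw [logDeriv_apply, logDeriv_apply, hev.deriv_eq, hev.eq_of_nhds]
  have hd1 : DifferentiableAt ℂ (fun s => (π:ℂ) ^ (-s / 2) * Complex.Gamma (s / 2 + 1)) s :=
    hpd.differentiableAt.mul hΓd.differentiableAt
  have hd2 : DifferentiableAt ℂ (fun s => riemannZeta s * ((π:ℂ) ^ (-s / 2) * Complex.Gamma (s / 2 + 1))) s :=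
    hζd.mul hd1
  rw [hld, logDeriv_mul s (by simpa using h1') (by positivity) (by fun_prop) hd2,
    logDeriv_mul s hζ (by positivity) hζd hd1,
    logDeriv_mul s hpne hΓ hpd.differentiableAt hΓd.differentiableAt]
  have e1 : logDeriv (fun s : ℂ => 2 * (s - 1)) s = 1 / (s - 1) := by
    have : HasDerivAt (fun s : ℂ => 2 * (s - 1)) (2 * 1) s := ((hasDerivAt_id s).sub_const 1).const_mul 2
    rw [logDeriv_apply, this.deriv]; field_simp
  have e2 : logDeriv (fun s : ℂ => (π:ℂ) ^ (-s/2)) s = - Real.log π / 2 := by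
    rw [logDeriv_apply, hpd.deriv, Complex.ofReal_log Real.pi_pos.le]; field_simp
  have e3 : logDeriv (fun s => Complex.Gamma (s/2+1)) s = Complex.digamma (s/2+1) / 2 := by
    rw [logDeriv_apply, hΓd.deriv, Complex.digamma_def, logDeriv_apply]; ring
  rw [e1, e2, e3, logDeriv_apply]
  ring

end SP


namespace SP

/-- real digamma -/
noncomputable def Psi (x : ℝ) : ℝ := deriv Real.Gamma x / Real.Gamma x

lemma ne_neg_nat {x : ℝ} (hx : 0 < x) (m : ℕ) : x ≠ -m := by
  have : (0:ℝ) ≤ m := Nat.cast_nonneg m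
  linarith

lemma ne_neg_natC {s : ℂ} (hs : 0 < s.re) (m : ℕ) : s ≠ -m := by
  rintro rfl
  simp at hs
  linarith [(Nat.cast_nonneg m : (0:ℝ) ≤ m)]

lemma digamma_ofReal (x : ℝ) (hx : 0 < x) : Complex.digamma x = (Psi x : ℂ) := by
  have h1 : HasDerivAt (fun y : ℝ => Complex.Gamma y) (deriv Complex.Gamma x) x :=
    (Complex.differentiableAt_Gamma (x:ℂ) (ne_neg_natC (by simpa using hx))).hasDerivAt.comp_ofReal
  have h2 : HasDerivAt (fun y : ℝ => ((Real.Gamma y : ℝ) : ℂ)) ((deriv Real.Gamma x : ℝ) : ℂ) x :=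
    (Real.differentiableAt_Gamma (ne_neg_nat hx)).hasDerivAt.ofReal_comp
  have h3 : (fun y : ℝ => Complex.Gamma y) = fun y : ℝ => ((Real.Gamma y : ℝ) : ℂ) := by
    funext y; exact Complex.Gamma_ofReal y
  rw [h3] at h1
  rw [Complex.digamma_def, logDeriv_apply, h1.unique h2, Complex.Gamma_ofReal, Psi]
  push_cast; rfl

lemma logGamma_deriv (x : ℝ) (hx : 0 < x) : HasDerivAt (Real.log ∘ Real.Gamma) (Psi x) x := by
  have h1 := (Real.differentiableAt_Gamma (ne_neg_nat hx)).hasDerivAt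
  exact h1.log (Real.Gamma_pos_of_pos hx).ne'

lemma logGamma_slope (x : ℝ) (hx : 0 < x) :
    slope (Real.log ∘ Real.Gamma) x (x + 1) = Real.log x := by
  rw [slope_def_field]
  simp only [Function.comp]
  rw [Real.Gamma_add_one hx.ne', Real.log_mul hx.ne' (Real.Gamma_pos_of_pos hx).ne']
  simp

lemma Psi_le_log (x : ℝ) (hx : 0 < x) : Psi x ≤ Real.log x := by
  rw [← logGamma_slope x hx]
  exact Real.convexOn_log_Gamma.le_slope_of_hasDerivAt hx (by simp; linarith) (by linarith)
    (logGamma_deriv x hx)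

lemma log_le_Psi (x : ℝ) (hx : 0 < x) : Real.log x ≤ Psi (x + 1) := by
  rw [← logGamma_slope x hx]
  exact Real.convexOn_log_Gamma.slope_le_of_hasDerivAt hx (by simp; linarith) (by linarith)
    (logGamma_deriv _ (by linarith))

lemma Psi_add_one (x : ℝ) (hx : 0 < x) : Psi (x + 1) = Psi x + 1 / x := by
  have h := Complex.digamma_apply_add_one (x:ℂ) (ne_neg_natC (by simpa using hx))
  rw [digamma_ofReal x hx] at h
  have h2 := digamma_ofReal (x+1) (by linarith)
  push_cast at h2
  rw [h2] at h
  have : ((Psi (x+1) : ℝ):ℂ) = ((Psi x + 1/x : ℝ) : ℂ) := by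
    rw [h]; push_cast; ring
  exact_mod_cast this

lemma Psi_one : Psi 1 = -eulerMascheroniConstant := by
  have := digamma_ofReal 1 one_pos
  rw [Complex.ofReal_one, Complex.digamma_one] at this
  exact_mod_cast this.symm

lemma Psi_telescope (x : ℝ) (hx : 0 < x) (N : ℕ) :
    Psi (x + 1) = Psi (x + N + 1) - ∑ k ∈ Finset.range N, 1 / (x + (k + 1)) := by
  induction N with
  | zero => simp
  | succ n ih =>
    rw [Finset.sum_range_succ, ih]
    have : x + ((n + 1 : ℕ) : ℝ) + 1 = (x + n + 1) + 1 := by push_cast; ring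
    rw [this, Psi_add_one (x + n + 1) (by positivity)]
    ring

lemma Psi_telescope_one (N : ℕ) :
    Psi 1 = Psi (N + 1) - ∑ k ∈ Finset.range N, 1 / ((k:ℝ) + 1) := by
  induction N with
  | zero => simp
  | succ n ih =>
    rw [Finset.sum_range_succ, ih]
    push_cast
    rw [Psi_add_one (n + 1) (by positivity)]
    ring

lemma Psi_hasSum (x : ℝ) (hx : 0 < x) :
    HasSum (fun n : ℕ => 2 * x / (((n:ℝ) + 1) * (2 * (n + 1) + 2 * x))) (Psi (x + 1) - Psi 1) := by
  rw [hasSum_iff_tendsto_nat_of_nonneg (fun n => by positivity)]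
  have hlim : Tendsto (fun N : ℕ => Psi (x + N + 1) - Psi (N + 1)) atTop (nhds 0) := by
    have hl : ∀ a b : ℝ, Tendsto (fun N : ℕ => Real.log (N + a) - Real.log (N + b)) atTop (nhds 0) := by
      intro a b
      have h1 : Tendsto (fun N : ℕ => Real.log (((N:ℝ) + a) / (N + b))) atTop (nhds (Real.log 1)) := by
        refine Tendsto.log ?_ one_ne_zero
        have h2 : Tendsto (fun N : ℕ => 1 + (a - b) / ((N:ℝ) + b)) atTop (nhds (1 + 0)) := by
          refine tendsto_const_nhds.add (tendsto_const_nhds.div_atTop ?_)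
          exact tendsto_atTop_add_const_right _ _ tendsto_natCast_atTop_atTop
        rw [add_zero] at h2
        refine h2.congr' ?_
        filter_upwards [tendsto_natCast_atTop_atTop.eventually (eventually_gt_atTop (-b))] with N hN
        have : (N:ℝ) + b ≠ 0 := by linarith
        field_simp; ring
      rw [Real.log_one] at h1
      refine h1.congr' ?_
      filter_upwards [tendsto_natCast_atTop_atTop.eventually (eventually_gt_atTop (-b)),
        tendsto_natCast_atTop_atTop.eventually (eventually_gt_atTop (-a))] with N hN hN'
      rw [Real.log_div] <;> linarith
    refine tendsto_of_tendsto_of_tendsto_of_le_of_le' (hl x 1) (hl (x+1) 0) ?_ ?_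
    · filter_upwards [eventually_gt_atTop 0] with N hN
      have hN' : (0:ℝ) < N := by exact_mod_cast hN
      have h1 := log_le_Psi (x + N) (by positivity)
      have h2 := Psi_le_log (N + 1) (by positivity)
      rw [add_comm (N:ℝ) x]; linarith
    · filter_upwards [eventually_gt_atTop 0] with N hN
      have hN' : (0:ℝ) < N := by exact_mod_cast hN
      have h1 := Psi_le_log (x + N + 1) (by positivity)
      have h2 := log_le_Psi (N) (by positivity)
      rw [show (N:ℝ) + (x + 1) = x + N + 1 by ring, add_zero]; linarith
  have := hlim.const_sub (Psi (x+1) - Psi 1)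
  rw [sub_zero] at this
  refine this.congr fun N => ?_
  rw [Psi_telescope x hx N, Psi_telescope_one N]
  have : ∀ A B C D : ℝ, A - B - (C - D) - (A - C) = D - B := by intros; ring
  rw [this, ← Finset.sum_sub_distrib]
  refine Finset.sum_congr rfl fun k _ => ?_
  field_simp
  ring

lemma digamma_term_bound (s : ℂ) (hs : 0 ≤ s.re) (n : ℕ) :
    ‖s / (((n:ℂ) + 1) * (2 * (n + 1) + s))‖ ≤ ‖s‖ * (1 / ((n:ℝ) + 1) ^ 2) := by
  rw [norm_div, norm_mul]
  have h1 : ‖(n:ℂ) + 1‖ = (n:ℝ) + 1 := by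
    have : (n:ℂ) + 1 = ((n + 1 : ℕ) : ℂ) := by push_cast; ring
    rw [this, Complex.norm_natCast]; push_cast; ring
  have h2 : (n:ℝ) + 1 ≤ ‖2 * ((n:ℂ) + 1) + s‖ := by
    refine le_trans ?_ (Complex.re_le_norm _)
    simp
    linarith [(Nat.cast_nonneg n : (0:ℝ) ≤ n)]
  rw [h1, div_eq_mul_one_div, sq]
  gcongr

lemma summable_inv_sq_succ : Summable (fun n : ℕ => 1 / ((n:ℝ) + 1) ^ 2) := by
  have := (summable_nat_add_iff 1).mpr (Real.summable_one_div_nat_pow.mpr (by norm_num : 1 < 2))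
  simpa using this

theorem digamma_series (s : ℂ) (hs : 0 < s.re) :
    Complex.digamma (s / 2 + 1) = -eulerMascheroniConstant +
      ∑' n : ℕ, s / (((n:ℂ) + 1) * (2 * (n + 1) + s)) := by
  set R := ‖s‖ + 3 with hR
  set U : Set ℂ := {z : ℂ | 0 < z.re} ∩ Metric.ball 0 R with hU
  have hUo : IsOpen U := (isOpen_lt continuous_const Complex.continuous_re).inter Metric.isOpen_ball
  have hUc : IsPreconnected U :=
    ((convex_halfSpace_re_gt 0).inter (convex_ball 0 R)).isPreconnected
  have hf : AnalyticOnNhd ℂ (fun s => Complex.digamma (s / 2 + 1)) U := by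
    refine DifferentiableOn.analyticOnNhd (fun z hz => ?_) hUo
    have hre : 0 < (z/2+1).re := by have : 0 < z.re := hz.1; simp; linarith
    have hA : AnalyticAt ℂ Complex.Gamma (z/2+1) := by
      refine DifferentiableOn.analyticAt (s := {z : ℂ | 0 < z.re}) (fun w hw => 
        (Complex.differentiableAt_Gamma w (ne_neg_natC hw)).differentiableWithinAt) ?_
      exact (isOpen_lt continuous_const Complex.continuous_re).mem_nhds hre
    have hd : DifferentiableAt ℂ Complex.digamma (z/2+1) :=
      hA.deriv.differentiableAt.div hA.differentiableAt (Complex.Gamma_ne_zero_of_re_pos hre)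
    exact (hd.comp z (by fun_prop : DifferentiableAt ℂ (fun s : ℂ => s/2+1) z)).differentiableWithinAt
  have hg : AnalyticOnNhd ℂ (fun s : ℂ => -eulerMascheroniConstant +
      ∑' n : ℕ, s / (((n:ℂ) + 1) * (2 * (n + 1) + s))) U := by
    refine DifferentiableOn.analyticOnNhd ?_ hUo
    refine DifferentiableOn.const_add _ ?_
    refine Complex.differentiableOn_tsum_of_summable_norm (summable_inv_sq_succ.mul_left R) (fun n => ?_)
      hUo (fun n z hz => ?_)
    · intro z hz
      have hz' : 0 < z.re := hz.1
      have : ((n:ℂ) + 1) * (2 * (n + 1) + z) ≠ 0 := by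
        refine mul_ne_zero (by exact_mod_cast Nat.succ_ne_zero n) ?_
        intro h
        have := congrArg Complex.re h
        simp at this
        linarith [(Nat.cast_nonneg n : (0:ℝ) ≤ n)]
      have hd1 : DifferentiableAt ℂ (fun z : ℂ => ((n:ℂ) + 1) * (2 * (n + 1) + z)) z := by fun_prop
      exact (differentiableAt_id.div hd1 this).differentiableWithinAt
    · refine (digamma_term_bound z (le_of_lt hz.1) n).trans ?_
      have : ‖z‖ < R := by simpa using hz.2
      gcongr
  have h1U : (1:ℂ) ∈ U := by
    refine ⟨by simp, ?_⟩
    simp [hR]; linarith [norm_nonneg s]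
  have hreal : ∀ x : ℝ, 0 < x → Complex.digamma ((x:ℂ) / 2 + 1) = -eulerMascheroniConstant +
      ∑' n : ℕ, (x:ℂ) / (((n:ℂ) + 1) * (2 * (n + 1) + x)) := by
    intro x hx
    have h := Psi_hasSum (x/2) (by linarith)
    have h2 := (Complex.hasSum_ofReal.mpr h).tsum_eq
    have h3 := digamma_ofReal (x/2+1) (by linarith)
    push_cast at h3
    rw [h3]
    have h4 : ∑' n : ℕ, (x:ℂ) / (((n:ℂ) + 1) * (2 * (n + 1) + x)) = 
        ∑' n : ℕ, ((2 * (x/2) / (((n:ℝ) + 1) * (2 * (n + 1) + 2 * (x/2))) : ℝ) : ℂ) := by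
      refine tsum_congr fun n => ?_
      push_cast
      rw [show (2:ℂ) * ((x:ℂ)/2) = x by ring]
    rw [h4, h2, Psi_one]
    push_cast; ring
  have hfreq : ∃ᶠ z in nhdsWithin (1:ℂ) {1}ᶜ, Complex.digamma (z / 2 + 1) = -eulerMascheroniConstant +
      ∑' n : ℕ, z / (((n:ℂ) + 1) * (2 * (n + 1) + z)) := by
    have ht : Tendsto (fun n : ℕ => (((1 + 1/((n:ℝ)+1) : ℝ)) : ℂ)) atTop (nhdsWithin (1:ℂ) {1}ᶜ) := by
      refine tendsto_nhdsWithin_iff.mpr ⟨?_, Eventually.of_forall fun n => ?_⟩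
      · have h1 : Tendsto (fun n : ℕ => 1 + 1/((n:ℝ)+1)) atTop (nhds (1 + 0)) :=
          tendsto_const_nhds.add tendsto_one_div_add_atTop_nhds_zero_nat
        rw [add_zero] at h1
        have := (Complex.continuous_ofReal.tendsto 1).comp h1
        rw [Complex.ofReal_one] at this
        exact this
      · simp only [mem_compl_iff, mem_singleton_iff]
        intro h
        have h2 : (1 + 1/((n:ℝ)+1) : ℝ) = 1 := by exact_mod_cast h
        have : (0:ℝ) < 1 / ((n:ℝ)+1) := by positivity
        linarith
    refine ht.frequently (Frequently.of_forall fun n => ?_)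
    exact hreal _ (by positivity)
  exact hf.eqOn_of_preconnected_of_frequently_eq hg hUc h1U hfreq ⟨hs, by simp [hR]⟩

end SP


namespace SP

/-- multiplicity of a zero of xi -/
noncomputable def mz (ρ : ℂ) : ℝ := (analyticOrderNatAt xi ρ : ℝ)

lemma mz_nonneg (ρ : ℂ) : 0 ≤ mz ρ := Nat.cast_nonneg _

lemma mz_eq_zero {ρ : ℂ} (h : xi ρ ≠ 0) : mz ρ = 0 := by
  unfold mz analyticOrderNatAt
  rw [(xi_diff.analyticAt ρ).analyticOrderAt_eq_zero.mpr h]; simp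

lemma mz_one_le {ρ : ℂ} (h : xi ρ = 0) : 1 ≤ mz ρ := by
  have hfA : AnalyticOnNhd ℂ xi univ := fun z _ => xi_diff.analyticAt z
  have htop : analyticOrderAt xi ρ ≠ ⊤ := by
    refine hfA.analyticOrderAt_ne_top_of_isPreconnected (x := 0) isPreconnected_univ (mem_univ _)
      (mem_univ _) ?_
    rw [(xi_diff.analyticAt 0).analyticOrderAt_eq_zero.mpr xi_zero_ne]; simp
  have hne : analyticOrderAt xi ρ ≠ 0 := by
    intro h'
    exact (xi_diff.analyticAt ρ).analyticOrderAt_eq_zero.mp h' h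
  have : analyticOrderNatAt xi ρ ≠ 0 := by
    unfold analyticOrderNatAt
    intro h0
    rcases ENat.toNat_eq_zero.mp h0 with h1 | h1
    · exact hne h1
    · exact htop h1
  unfold mz
  exact_mod_cast Nat.one_le_iff_ne_zero.mpr this

lemma zero_of_mz {ρ : ℂ} (h : mz ρ ≠ 0) : xi ρ = 0 := by
  by_contra h'; exact h (mz_eq_zero h')

lemma ZR_mono {R R' : ℝ} (h : R ≤ R') : ZR xi R ⊆ ZR xi R' := by
  intro ρ hρ
  rw [mem_ZR xi xi_diff xi_zero_ne] at hρ ⊢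
  exact ⟨hρ.1, hρ.2.trans h⟩

lemma exists_ZR (t : Finset ℂ) : ∃ R0 : ℝ, ∀ R ≥ R0, ∀ ρ ∈ t, xi ρ = 0 → ρ ∈ ZR xi R := by
  obtain ⟨R0, hR0⟩ := (t.image (fun ρ => ‖ρ‖)).bddAbove
  refine ⟨R0, fun R hR ρ hρ h0 => ?_⟩
  rw [mem_ZR xi xi_diff xi_zero_ne]
  refine ⟨h0, le_trans (hR0 ?_) hR⟩
  simp only [Finset.coe_image, mem_image, Finset.mem_coe]
  exact ⟨ρ, hρ, rfl⟩

lemma tendsto_ZR {E : Type*} [NormedAddCommGroup E] {f : ℂ → E} (hf : Summable f)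
    (h0 : ∀ ρ, xi ρ ≠ 0 → f ρ = 0) :
    Tendsto (fun R : ℝ => ∑ ρ ∈ ZR xi R, f ρ) atTop (nhds (∑' ρ, f ρ)) := by
  classical
  have h := hf.hasSum
  rw [HasSum, SummationFilter.unconditional_filter] at h
  intro U hU
  have h1 := h hU
  rw [mem_map, mem_atTop_sets] at h1
  obtain ⟨t, ht⟩ := h1
  obtain ⟨R0, hR0⟩ := exists_ZR t
  rw [mem_map, mem_atTop_sets]
  refine ⟨R0, fun R hR => ?_⟩
  have h2 := ht (t ∪ ZR xi R) Finset.subset_union_left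
  simp only [mem_preimage] at h2 ⊢
  have h3 : ∑ ρ ∈ t ∪ ZR xi R, f ρ = ∑ ρ ∈ ZR xi R, f ρ := by
    refine (Finset.sum_subset Finset.subset_union_right fun ρ hρ hn => ?_).symm
    rcases Finset.mem_union.mp hρ with h' | h'
    · refine h0 ρ fun hz => hn (hR0 R hR ρ h' hz)
    · exact absurd h' hn
  rwa [h3] at h2

lemma hasSum_of_tendsto_ZR {f : ℂ → ℝ} (hn : ∀ ρ, 0 ≤ f ρ) (h0 : ∀ ρ, xi ρ ≠ 0 → f ρ = 0) {a : ℝ}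
    (h : Tendsto (fun R : ℝ => ∑ ρ ∈ ZR xi R, f ρ) atTop (nhds a)) : HasSum f a := by
  classical
  have hle : ∀ R, ∑ ρ ∈ ZR xi R, f ρ ≤ a := by
    intro R
    refine ge_of_tendsto h ?_
    filter_upwards [eventually_ge_atTop R] with R' hR'
    exact Finset.sum_le_sum_of_subset_of_nonneg (ZR_mono hR') fun ρ _ _ => hn ρ
  have hs : Summable f := by
    refine summable_of_sum_le hn (c := a) fun t => ?_
    obtain ⟨R0, hR0⟩ := exists_ZR t
    refine le_trans ?_ (hle R0)
    rw [← Finset.sum_filter_add_sum_filter_not t (fun ρ => xi ρ = 0)]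
    have : ∑ ρ ∈ t with ¬ xi ρ = 0, f ρ = 0 :=
      Finset.sum_eq_zero fun ρ hρ => h0 ρ (Finset.mem_filter.mp hρ).2
    rw [this, add_zero]
    refine Finset.sum_le_sum_of_subset_of_nonneg (fun ρ hρ => ?_) fun ρ _ _ => hn ρ
    exact hR0 R0 le_rfl ρ (Finset.mem_filter.mp hρ).1 (Finset.mem_filter.mp hρ).2
  have := tendsto_nhds_unique h (tendsto_ZR hs h0)
  rw [this]; exact hs.hasSum

lemma xi_ne_of_re (hRH : RiemannHypothesis) {s : ℂ} (h : s.re ≠ 1 / 2) : xi s ≠ 0 := fun h' =>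
  h (xi_zero_re hRH s h')

lemma hadamard_xi (z w : ℂ) (hz : xi z ≠ 0) (hw : xi w ≠ 0) :
    Tendsto (fun R : ℝ => ∑ ρ ∈ ZR xi R, (mz ρ : ℂ) * (1 / (z - ρ) - 1 / (w - ρ))) atTop
      (nhds (logDeriv xi z - logDeriv xi w)) := by
  obtain ⟨C, hC⟩ := xi_growth
  have := hadamard_diff xi xi_diff xi_zero_ne C (3/2) (by norm_num) hC z w hz hw
  simpa [mz] using this

/-- logarithmic derivative of xi on the real axis -/
noncomputable def XX (G : ℝ) : ℝ := (logDeriv xi (1 / 2 + G)).re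

lemma zero_hasSum (hRH : RiemannHypothesis) (G : ℝ) (hG : 0 < G) :
    HasSum (fun ρ : ℂ => mz ρ * (G / (G ^ 2 + ρ.im ^ 2))) (XX G) := by
  refine hasSum_of_tendsto_ZR (fun ρ => ?_) (fun ρ h => ?_) ?_
  · have := mz_nonneg ρ; positivity
  · rw [mz_eq_zero h, zero_mul]
  · have hz : xi (1/2 + G) ≠ 0 := xi_ne_of_re hRH (by simp; linarith)
    have hw : xi (1 - (1/2 + G)) ≠ 0 := xi_ne_of_re hRH (by simp; intro h; linarith)
    have h := hadamard_xi _ _ hz hw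
    rw [logDeriv_xi_one_sub] at h
    have h2 := ((Complex.continuous_re.tendsto _).comp h).div_const 2
    have e : (logDeriv xi (1 / 2 + ↑G) - -logDeriv xi (1 / 2 + ↑G)).re / 2 = XX G := by
      simp [XX]
    rw [e] at h2
    refine h2.congr fun R => ?_
    simp only [Function.comp]
    rw [Complex.re_sum, Finset.sum_div]
    refine Finset.sum_congr rfl fun ρ hρ => ?_
    rw [mem_ZR xi xi_diff xi_zero_ne] at hρ
    have hre := xi_zero_re hRH ρ hρ.1
    rw [Complex.re_ofReal_mul, mul_div_assoc]
    congr 1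
    have e1 : (1 / (1 / 2 + (G:ℂ) - ρ)).re = G / (G ^ 2 + ρ.im ^ 2) := by
      rw [one_div, Complex.inv_re, Complex.normSq_apply]
      simp [hre]; ring_nf
    have e2 : (1 / (1 - (1 / 2 + (G:ℂ)) - ρ)).re = -G / (G ^ 2 + ρ.im ^ 2) := by
      rw [one_div, Complex.inv_re, Complex.normSq_apply]
      simp [hre]; ring_nf
    rw [Complex.sub_re, e1, e2]
    ring

lemma norm_sq_zero (hRH : RiemannHypothesis) {ρ : ℂ} (h : xi ρ = 0) :
    ‖ρ‖ ^ 2 = (1/2) ^ 2 + ρ.im ^ 2 := by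
  rw [Complex.sq_norm, Complex.normSq_apply, xi_zero_re hRH ρ h]; ring

lemma S_term (hRH : RiemannHypothesis) (ρ : ℂ) :
    mz ρ / ‖ρ‖ ^ 2 = 2 * (mz ρ * (1 / 2 / ((1 / 2) ^ 2 + ρ.im ^ 2))) := by
  by_cases h : xi ρ = 0
  · rw [norm_sq_zero hRH h]; ring
  · rw [mz_eq_zero h]; simp

lemma S_hasSum (hRH : RiemannHypothesis) :
    HasSum (fun ρ : ℂ => mz ρ / ‖ρ‖ ^ 2) (2 * XX (1/2)) := by
  have := (zero_hasSum hRH (1/2) (by norm_num)).mul_left 2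
  have e : (fun ρ : ℂ => mz ρ / ‖ρ‖ ^ 2) = 
      fun ρ => 2 * (mz ρ * (1 / 2 / ((1 / 2) ^ 2 + ρ.im ^ 2))) := by
    funext ρ
    exact S_term hRH ρ
  rw [e]; exact this

lemma logDeriv_xi_real_one : logDeriv xi 1 = (XX (1/2) : ℂ) := by
  have : XX (1/2) = (eulerMascheroniConstant - Real.log (4 * π)) / 2 + 1 := by
    unfold XX
    rw [show (1/2 + ((1/2:ℝ):ℂ)) = 1 by push_cast; norm_num, logDeriv_xi_one, Complex.ofReal_re]
  rw [this, logDeriv_xi_one]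

lemma XX_half_le : XX (1/2) ≤ 0.1 := by
  have : XX (1/2) = (eulerMascheroniConstant - Real.log (4 * π)) / 2 + 1 := by
    unfold XX
    rw [show (1/2 + ((1/2:ℝ):ℂ)) = 1 by push_cast; norm_num, logDeriv_xi_one, Complex.ofReal_re]
  rw [this]
  have h1 := Real.eulerMascheroniConstant_lt_two_thirds
  have h2 : Real.log (4 * π) ≥ 2.47 := by
    rw [ge_iff_le, Real.le_log_iff_exp_le (by positivity)]
    have h3 : Real.exp 2.47 ≤ 12 := by
      have := Real.exp_bound_div_one_sub_of_interval (x := 0.03) (by norm_num) (by norm_num)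
      have h4 := Real.exp_one_gt_d9
      have h5 := Real.exp_one_lt_d9
      have h6 : Real.exp 2.47 = (Real.exp 1) ^ 3 * Real.exp (-0.5) * Real.exp (-0.03) := by
        rw [← Real.exp_nat_mul, ← Real.exp_add, ← Real.exp_add]; norm_num
      have h7 : Real.exp (-0.03) ≤ 1 / 1.03 := by
        rw [Real.exp_neg, one_div]
        exact inv_anti₀ (by norm_num) (by linarith [Real.add_one_le_exp (0.03:ℝ)])
      have h8 : Real.exp (-0.5) ≤ 1 / 1.64 := by
        rw [Real.exp_neg, one_div]
        refine inv_anti₀ (by norm_num) ?_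
        have : Real.exp 1 = Real.exp 0.5 ^ 2 := by rw [← Real.exp_nat_mul]; norm_num
        by_contra h
        push Not at h
        nlinarith [Real.exp_pos 0.5]
      rw [h6]
      calc Real.exp 1 ^ 3 * Real.exp (-0.5) * Real.exp (-0.03) ≤ 2.7182818286 ^ 3 * (1/1.64) * (1/1.03) := by
            gcongr
        _ ≤ 12 := by norm_num
    linarith [Real.pi_gt_three]
  linarith

lemma norm_sub_zero_ge (hRH : RiemannHypothesis) {s ρ : ℂ} (hs : 1 ≤ |s.re - 1/2|) (h : xi ρ = 0) :
    1 ≤ ‖s - ρ‖ := by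
  refine le_trans ?_ (Complex.abs_re_le_norm _)
  rwa [Complex.sub_re, xi_zero_re hRH ρ h]

lemma zero_ne {ρ : ℂ} (h : xi ρ = 0) : ρ ≠ 0 := by
  rintro rfl; exact xi_zero_ne h

lemma term_norm (hRH : RiemannHypothesis) {s : ℂ} (hs : 1 ≤ |s.re - 1/2|) (ρ : ℂ) :
    mz ρ / (‖ρ‖ * ‖s - ρ‖) ≤ (1 + ‖s‖) * (mz ρ / ‖ρ‖ ^ 2) := by
  by_cases h : xi ρ = 0
  · have h1 := norm_sub_zero_ge hRH hs h
    have h2 : ‖ρ‖ ≤ (1 + ‖s‖) * ‖s - ρ‖ := by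
      have : ‖ρ‖ ≤ ‖s‖ + ‖s - ρ‖ := by
        have := norm_sub_le s (s - ρ); simpa using this
      nlinarith [norm_nonneg s]
    have h3 := norm_pos_iff.mpr (zero_ne h)
    have h4 : (0:ℝ) < ‖s - ρ‖ := by linarith
    rw [div_le_iff₀ (by positivity)]
    have : (1 + ‖s‖) * (mz ρ / ‖ρ‖ ^ 2) * (‖ρ‖ * ‖s - ρ‖) = mz ρ * ((1 + ‖s‖) * ‖s - ρ‖ / ‖ρ‖) := by
      field_simp
    rw [this]
    refine le_mul_of_one_le_right (mz_nonneg _) ?_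
    rw [le_div_iff₀ h3]; linarith
  · rw [mz_eq_zero h]; simp

lemma summable_term (hRH : RiemannHypothesis) {s : ℂ} (hs : 1 ≤ |s.re - 1/2|) :
    Summable (fun ρ : ℂ => mz ρ / (‖ρ‖ * ‖s - ρ‖)) :=
  Summable.of_nonneg_of_le (fun ρ => by have := mz_nonneg ρ; positivity) (term_norm hRH hs)
    ((S_hasSum hRH).summable.mul_left _)

lemma hadamard_hasSum (hRH : RiemannHypothesis) {s : ℂ} (hs : 1 ≤ |s.re - 1/2|) :
    HasSum (fun ρ : ℂ => (mz ρ : ℂ) * (s / (ρ * (s - ρ)))) (logDeriv xi s - logDeriv xi 0) := by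
  have hsum : Summable (fun ρ : ℂ => (mz ρ : ℂ) * (s / (ρ * (s - ρ)))) := by
    refine Summable.of_norm_bounded ((summable_term hRH hs).mul_left ‖s‖) fun ρ => ?_
    rw [norm_mul, norm_div, norm_mul, Complex.norm_real, Real.norm_eq_abs, abs_of_nonneg (mz_nonneg _)]
    apply le_of_eq; ring
  have hsre : s.re ≠ 1/2 := by
    intro h; rw [h] at hs; norm_num at hs
  have h1 := hadamard_xi s 0 (xi_ne_of_re hRH hsre) xi_zero_ne
  have h2 := tendsto_ZR hsum (fun ρ h => by rw [mz_eq_zero h]; simp)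
  have h3 : Tendsto (fun R : ℝ => ∑ ρ ∈ ZR xi R, (mz ρ : ℂ) * (s / (ρ * (s - ρ)))) atTop
      (nhds (logDeriv xi s - logDeriv xi 0)) := by
    refine h1.congr fun R => Finset.sum_congr rfl fun ρ hρ => ?_
    rw [mem_ZR xi xi_diff xi_zero_ne] at hρ
    have e1 := zero_ne hρ.1
    have e2 : s - ρ ≠ 0 := by
      have := norm_sub_zero_ge hRH hs hρ.1
      intro h; rw [h] at this; norm_num at this
    congr 1
    field_simp
    ring
  rw [← tendsto_nhds_unique h2 h3]
  exact hsum.hasSum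

lemma logDeriv_xi_zero : logDeriv xi 0 = -(XX (1/2) : ℂ) := by
  have := logDeriv_xi_one_sub 1
  rw [sub_self, logDeriv_xi_real_one] at this
  exact this

/-- count of zeros -/
lemma count_le (hRH : RiemannHypothesis) (G : ℝ) (hG : 0 < G) (t : Finset ℂ)
    (ht : ∀ ρ ∈ t, xi ρ = 0 ∧ |ρ.im| ≤ G) : (t.card : ℝ) ≤ 2 * G * XX G := by
  have h := zero_hasSum hRH G hG
  have h1 : ∑ ρ ∈ t, mz ρ * (G / (G ^ 2 + ρ.im ^ 2)) ≤ XX G :=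
    sum_le_hasSum t (fun ρ _ => by have := mz_nonneg ρ; positivity) h
  have h2 : (t.card : ℝ) * (1 / (2 * G)) ≤ ∑ ρ ∈ t, mz ρ * (G / (G ^ 2 + ρ.im ^ 2)) := by
    rw [← nsmul_eq_mul, ← Finset.sum_const]
    refine Finset.sum_le_sum fun ρ hρ => ?_
    have hm := mz_one_le (ht ρ hρ).1
    have hi := sq_le_sq' (abs_le.mp (ht ρ hρ).2).1 (abs_le.mp (ht ρ hρ).2).2
    have : 1 / (2 * G) ≤ G / (G ^ 2 + ρ.im ^ 2) := by
      rw [div_le_div_iff₀ (by positivity) (by positivity)]; nlinarith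
    calc 1 / (2 * G) ≤ 1 * (G / (G ^ 2 + ρ.im ^ 2)) := by rw [one_mul]; exact this
      _ ≤ _ := by gcongr
  have h3 := h2.trans h1
  rw [mul_one_div, div_le_iff₀ (by positivity)] at h3
  linarith

/-- tail of zeros -/
lemma tail_le (hRH : RiemannHypothesis) (G : ℝ) (hG : 0 < G) (ρ : ℂ) (h : G < |ρ.im|) :
    mz ρ / ‖ρ‖ ^ 2 ≤ 2 / G * (mz ρ * (G / (G ^ 2 + ρ.im ^ 2))) := by
  by_cases h0 : xi ρ = 0
  · rw [norm_sq_zero hRH h0]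
    have hi : G ^ 2 ≤ ρ.im ^ 2 := by rw [← sq_abs ρ.im]; gcongr
    have e : 2 / G * (mz ρ * (G / (G ^ 2 + ρ.im ^ 2))) = mz ρ * (2 / (G ^ 2 + ρ.im ^ 2)) := by
      field_simp
    rw [e, div_eq_mul_one_div]
    refine mul_le_mul_of_nonneg_left ?_ (mz_nonneg _)
    have : 0 < ρ.im ^ 2 := by nlinarith
    rw [div_le_div_iff₀ (by positivity) (by positivity)]
    nlinarith
  · rw [mz_eq_zero h0]; simp

lemma zeta_logDeriv_eq (σ : ℝ) (hσ : 1 < σ) :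
    deriv riemannZeta (σ:ℂ) / riemannZeta σ =
      -((∑' n : ℕ, ArithmeticFunction.vonMangoldt n * (n:ℝ) ^ (-σ) : ℝ) : ℂ) := by
  have h := ArithmeticFunction.LSeries_vonMangoldt_eq_deriv_riemannZeta_div (s := (σ:ℂ)) (by simpa using hσ)
  rw [eq_neg_iff_add_eq_zero, Complex.ofReal_tsum]
  have h2 : LSeries (fun n => ((ArithmeticFunction.vonMangoldt n : ℝ) : ℂ)) σ =
      ∑' n : ℕ, ((ArithmeticFunction.vonMangoldt n * (n:ℝ) ^ (-σ) : ℝ) : ℂ) := by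
    rw [LSeries]
    refine tsum_congr fun n => ?_
    rcases eq_or_ne n 0 with rfl | hn
    · simp
    · rw [LSeries.term_of_ne_zero hn]
      push_cast
      rw [Complex.ofReal_cpow (Nat.cast_nonneg n), div_eq_mul_inv, ← Complex.cpow_neg]
      push_cast; rfl
  rw [← h2, h]; ring

lemma XX_eq (G : ℝ) (hG : 1 / 2 < G) : XX G = 1 / (G - 1/2)
    - (∑' n : ℕ, ArithmeticFunction.vonMangoldt n * (n:ℝ) ^ (-(1/2 + G)) : ℝ) - Real.log π / 2
    + Psi ((1/2 + G) / 2 + 1) / 2 := by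
  unfold XX
  have hc : (1/2 + (G:ℂ)) = ((1/2 + G : ℝ) : ℂ) := by push_cast; ring
  rw [hc, logDeriv_xi _ (by simp; linarith), zeta_logDeriv_eq _ (by linarith)]
  have h3 := digamma_ofReal ((1/2+G)/2+1) (by linarith)
  have h4 : ((1/2 + G : ℝ) : ℂ) / 2 + 1 = (((1/2+G)/2+1 : ℝ) : ℂ) := by push_cast; ring
  rw [h4, h3]
  rw [← Complex.ofReal_re (1 / (G - 1/2)
    - (∑' n : ℕ, ArithmeticFunction.vonMangoldt n * (n:ℝ) ^ (-(1/2 + G)) : ℝ) - Real.log π / 2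
    + Psi ((1/2 + G) / 2 + 1) / 2)]
  congr 1
  push_cast
  ring

lemma vM_tsum_nonneg (σ : ℝ) : 0 ≤ ∑' n : ℕ, ArithmeticFunction.vonMangoldt n * (n:ℝ) ^ (-σ) :=
  tsum_nonneg fun n => mul_nonneg ArithmeticFunction.vonMangoldt_nonneg (Real.rpow_nonneg (Nat.cast_nonneg n) _)

lemma log_pi_ge : 1.09 ≤ Real.log π := by
  rw [Real.le_log_iff_exp_le Real.pi_pos]
  have h5 := Real.exp_one_lt_d9
  have h : Real.exp 1.09 = Real.exp 1 * Real.exp 0.09 := by rw [← Real.exp_add]; norm_num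
  have h7 := Real.exp_bound_div_one_sub_of_interval (x := 0.09) (by norm_num) (by norm_num)
  rw [h]
  calc Real.exp 1 * Real.exp 0.09 ≤ (2.7182818286:ℝ) * (1 / (1 - 0.09)) := by gcongr
    _ ≤ 3 := by norm_num
    _ ≤ π := Real.pi_gt_three.le

lemma XX_big_le : XX 50000 ≤ 4.6 := by
  rw [XX_eq _ (by norm_num)]
  have h1 := vM_tsum_nonneg (1/2 + 50000)
  have h2 := log_pi_ge
  have h3 := Psi_le_log ((1/2+50000)/2+1) (by norm_num)
  have h4 : Real.log ((1/2+50000)/2+1) ≤ 10.2 := by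
    have e1 : Real.log ((1/2+50000)/2+1) ≤ Real.log (2 ^ 14 * 1.6) :=
      Real.log_le_log (by norm_num) (by norm_num)
    rw [Real.log_mul (by norm_num) (by norm_num), Real.log_pow] at e1
    have e2 := Real.log_two_lt_d9
    have e3 := Real.log_le_sub_one_of_pos (show (0:ℝ) < 1.6 / 2 by norm_num)
    rw [Real.log_div (by norm_num) (by norm_num)] at e3
    push_cast at e1
    linarith
  linarith

lemma XX_mu_ge : 2.4 ≤ XX 999.5 := by
  rw [XX_eq _ (by norm_num)]
  have h2 : Real.log π ≤ 2 * Real.log 2 := by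
    rw [show 2 * Real.log 2 = Real.log 4 by rw [show (4:ℝ) = 2 ^ 2 by norm_num, Real.log_pow]; norm_num]
    exact Real.log_le_log Real.pi_pos Real.pi_le_four
  have h3 := log_le_Psi ((1/2+999.5)/2) (by norm_num)
  have h4 : 9 * Real.log 2 - 0.025 ≤ Real.log ((1/2+999.5)/2) := by
    have := Real.one_sub_inv_le_log_of_pos (show (0:ℝ) < 500 / 512 by norm_num)
    rw [Real.log_div (by norm_num) (by norm_num), show (512:ℝ) = 2 ^ 9 by norm_num, Real.log_pow] at this
    norm_num at this ⊢
    linarith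
  have h5 : (∑' n : ℕ, ArithmeticFunction.vonMangoldt n * (n:ℝ) ^ (-(1/2 + 999.5:ℝ))) ≤ 0.001 := by
    have hb : ∀ n : ℕ, ArithmeticFunction.vonMangoldt n * (n:ℝ) ^ (-(1/2 + 999.5:ℝ)) ≤
        (1/2) ^ 20 * (1 / (n:ℝ) ^ 2) := by
      intro n
      rcases lt_or_ge n 2 with h | h
      · interval_cases n <;> simp
      · have hn : (2:ℝ) ≤ n := by exact_mod_cast h
        have hn0 : (0:ℝ) < n := by linarith
        have e1 : ArithmeticFunction.vonMangoldt n ≤ n :=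
          ArithmeticFunction.vonMangoldt_le_log.trans (Real.log_le_self hn0.le)
        have e2 : (n:ℝ) ^ (-(1/2 + 999.5:ℝ)) ≤ (n:ℝ) ^ (-(23:ℕ):ℝ) :=
          Real.rpow_le_rpow_of_exponent_le (by linarith) (by norm_num)
        rw [Real.rpow_neg hn0.le (23:ℕ), Real.rpow_natCast] at e2
        calc _ ≤ (n:ℝ) * ((n:ℝ) ^ 23)⁻¹ := by gcongr
          _ = ((n:ℝ) ^ 20)⁻¹ * (1 / (n:ℝ) ^ 2) := by field_simp
          _ ≤ _ := by
            gcongr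
            rw [← inv_pow]
            gcongr
            rw [one_div]
            exact inv_anti₀ (by norm_num) hn
    have hs := hasSum_zeta_two.mul_left ((1/2:ℝ)^20)
    have := Summable.of_nonneg_of_le (fun n => mul_nonneg ArithmeticFunction.vonMangoldt_nonneg (Real.rpow_nonneg (Nat.cast_nonneg n) _)) hb hs.summable
    refine (this.tsum_le_tsum hb hs.summable).trans ?_
    rw [hs.tsum_eq]
    nlinarith [Real.pi_lt_d2, Real.pi_pos]
  have h6 := Real.log_two_gt_d9
  norm_num at *
  linarith

end SP


namespace SP

open MeasureTheory in
/-- Laplace transform at `2 + it`. -/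
noncomputable def LT (f : ℝ → ℂ) (t : ℝ) : ℂ :=
  ∫ u : ℝ, Complex.exp (-(2 + t * Complex.I) * u) * f u

/-- growth class -/
structure Good (f : ℝ → ℂ) (B : ℝ) : Prop where
  cont : Continuous f
  zero : ∀ u ≤ 0, f u = 0
  bd : ∀ u, 0 ≤ u → ‖f u‖ ≤ B * Real.exp (3 / 2 * u)

lemma Good.nonneg {f B} (h : Good f B) : 0 ≤ B := by
  have := (norm_nonneg _).trans (h.bd 0 le_rfl)
  simpa using this

/-- dominating function -/
noncomputable def dom (u : ℝ) : ℝ := (Ioi (0:ℝ)).indicator (fun u => Real.exp (-(1/2) * u)) u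

lemma dom_int : MeasureTheory.Integrable dom := by
  unfold dom
  rw [MeasureTheory.integrable_indicator_iff measurableSet_Ioi]
  exact integrableOn_exp_mul_Ioi (by norm_num) 0

lemma Good.bound {f B} (h : Good f B) (t u : ℝ) :
    ‖Complex.exp (-(2 + t * Complex.I) * u) * f u‖ ≤ B * dom u := by
  unfold dom
  by_cases hu : u ∈ Ioi (0:ℝ)
  · rw [Set.indicator_of_mem hu, norm_mul, Complex.norm_exp]
    have hu' : 0 < u := hu
    have := h.bd u hu'.le
    calc _ ≤ Real.exp ((-(2 + t * Complex.I) * u : ℂ)).re * (B * Real.exp (3 / 2 * u)) := by gcongr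
      _ = B * (Real.exp (-2 * u) * Real.exp (3/2*u)) := by simp; ring
      _ = _ := by rw [← Real.exp_add]; ring_nf
  · rw [Set.indicator_of_notMem hu, h.zero u (by simpa using hu)]; simp

lemma Good.integrable {f B} (h : Good f B) (t : ℝ) :
    MeasureTheory.Integrable (fun u : ℝ => Complex.exp (-(2 + t * Complex.I) * u) * f u) := by
  refine (dom_int.const_mul B).mono' ?_ (Filter.Eventually.of_forall (h.bound t))
  have := h.cont
  exact Continuous.aestronglyMeasurable (by fun_prop)

lemma Good.add {f g A B} (hf : Good f A) (hg : Good g B) : Good (fun u => f u + g u) (A + B) where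
  cont := hf.cont.add hg.cont
  zero u hu := by rw [hf.zero u hu, hg.zero u hu, add_zero]
  bd u hu := by
    have := norm_add_le (f u) (g u)
    have := hf.bd u hu
    have := hg.bd u hu
    linarith

lemma Good.cmul {f A} (hf : Good f A) (c : ℂ) : Good (fun u => c * f u) (‖c‖ * A) where
  cont := continuous_const.mul hf.cont
  zero u hu := by rw [hf.zero u hu, mul_zero]
  bd u hu := by
    rw [norm_mul, mul_assoc]
    exact mul_le_mul_of_nonneg_left (hf.bd u hu) (norm_nonneg _)

lemma Good.LT_add {f g A B} (hf : Good f A) (hg : Good g B) (t : ℝ) :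
    LT (fun u => f u + g u) t = LT f t + LT g t := by
  unfold LT
  rw [← MeasureTheory.integral_add (hf.integrable t) (hg.integrable t)]
  simp only [mul_add]

lemma LT_cmul (f : ℝ → ℂ) (c : ℂ) (t : ℝ) : LT (fun u => c * f u) t = c * LT f t := by
  unfold LT
  rw [← MeasureTheory.integral_const_mul]
  congr 1; funext u; ring

lemma Good.shift {f A} (hf : Good f A) (c : ℝ) (hc : 0 ≤ c) :
    Good (fun u => f (u - c)) (A * Real.exp (-(3/2) * c)) where
  cont := hf.cont.comp (continuous_id.sub continuous_const)
  zero u hu := hf.zero _ (by linarith)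
  bd u hu := by
    have hA := hf.nonneg
    rcases le_total (u - c) 0 with h | h
    · rw [hf.zero _ h, norm_zero]; positivity
    · refine (hf.bd _ h).trans (le_of_eq ?_)
      rw [mul_assoc, ← Real.exp_add]; ring_nf

lemma LT_shift (f : ℝ → ℂ) (c t : ℝ) :
    LT (fun u => f (u - c)) t = Complex.exp (-(2 + t * Complex.I) * c) * LT f t := by
  unfold LT
  rw [← MeasureTheory.integral_const_mul,
    ← MeasureTheory.integral_sub_right_eq_self (fun u : ℝ => Complex.exp (-(2 + t * Complex.I) * c) *
      (Complex.exp (-(2 + t * Complex.I) * u) * f u)) c]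
  congr 1; funext u
  rw [← mul_assoc, ← Complex.exp_add]
  congr 2; push_cast; ring

lemma Good.sum {ι : Type*} [Countable ι] {F : ι → ℝ → ℂ} {b : ι → ℝ} (h : ∀ i, Good (F i) (b i))
    (hb : Summable b) : Good (fun u => ∑' i, F i u) (∑' i, b i) ∧
      (∀ u, Summable fun i => F i u) ∧
      ∀ t, HasSum (fun i => LT (F i) t) (LT (fun u => ∑' i, F i u) t) := by
  have hbd : ∀ i u, ‖F i u‖ ≤ b i * Real.exp (3/2 * |u|) := by
    intro i u
    have hb0 := (h i).nonneg
    rcases le_total u 0 with hu | hu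
    · rw [(h i).zero u hu, norm_zero]; positivity
    · rw [abs_of_nonneg hu]; exact (h i).bd u hu
  have hsum : ∀ u, Summable fun i => F i u := fun u =>
    Summable.of_norm_bounded (hb.mul_right _) (fun i => hbd i u)
  have hgood : Good (fun u => ∑' i, F i u) (∑' i, b i) := by
    refine ⟨?_, ?_, ?_⟩
    · rw [continuous_iff_continuousAt]
      intro u
      have hon : ContinuousOn (fun u => ∑' i, F i u) (Metric.ball 0 (|u|+1)) := by
        refine continuousOn_tsum (u := fun i => b i * Real.exp (3/2*(|u|+1)))
          (fun i => (h i).cont.continuousOn) (hb.mul_right _) ?_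
        intro i v hv
        have hb0 := (h i).nonneg
        refine (hbd i v).trans ?_
        have : |v| ≤ |u|+1 := by simpa using (mem_ball_zero_iff.mp hv).le
        gcongr
      exact hon.continuousAt (Metric.isOpen_ball.mem_nhds (by simp))
    · intro u hu; simp [(h _).zero u hu]
    · intro u hu
      rw [← tsum_mul_right]
      exact tsum_of_norm_bounded (hb.mul_right _).hasSum (fun i => (h i).bd u hu)
  refine ⟨hgood, hsum, fun t => ?_⟩
  have := MeasureTheory.hasSum_integral_of_summable_integral_norm
    (F := fun i (u:ℝ) => Complex.exp (-(2 + t * Complex.I) * u) * F i u)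
    (μ := MeasureTheory.volume) (fun i => (h i).integrable t) ?_
  · unfold LT
    simp only [tsum_mul_left] at this
    exact this
  · refine Summable.of_nonneg_of_le (fun i => MeasureTheory.integral_nonneg (fun u => norm_nonneg _))
      (fun i => ?_) (hb.mul_right (∫ u, dom u))
    rw [← MeasureTheory.integral_const_mul]
    exact MeasureTheory.integral_mono ((h i).integrable t).norm (dom_int.const_mul _)
      ((h i).bound t)

lemma LT_unique {f g A B} (hf : Good f A) (hg : Good g B) (h : ∀ t, LT f t = LT g t) : f = g := by
  have hn := hg.cmul (-1)
  have hs := hf.add hn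
  have h0 : ∀ t, LT (fun u => f u + -1 * g u) t = 0 := by
    intro t
    rw [hf.LT_add hn, LT_cmul, h]; ring
  set k : ℝ → ℂ := fun u => Complex.exp (-(2 + (0:ℝ) * Complex.I) * u) * (f u + -1 * g u) with hk
  have hki := hs.integrable 0
  have hkc : Continuous k := by
    have := hs.cont
    fun_prop
  have hF : FourierTransform.fourier k = fun _ => (0:ℂ) := by
    funext w
    rw [Real.fourier_real_eq_integral_exp_smul, ← h0 (2 * π * w)]
    unfold LT
    congr 1; funext u
    rw [smul_eq_mul, hk, ← mul_assoc, ← Complex.exp_add]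
    congr 2; push_cast; ring
  have hz := Continuous.fourierInv_fourier_eq hkc hki (by rw [hF]; exact MeasureTheory.integrable_zero _ _ _)
  funext u
  have hu : k u = 0 := by
    rw [← hz, hF, Real.fourierInv_eq]
    simp
  rw [hk] at hu
  have := (mul_eq_zero.mp hu).resolve_left (Complex.exp_ne_zero _)
  linear_combination this

/-- building block -/
noncomputable def EE (μ : ℝ) (a : ℂ) (u : ℝ) : ℂ :=
  (Complex.exp (a * (max u 0 : ℝ)) - Complex.exp (-μ * (max u 0 : ℝ))) / (a + μ)

lemma EE_norm (μ : ℝ) (hμ : 0 < μ) (a : ℂ) (c : ℝ) (hc : 0 ≤ c) (ha : a.re ≤ c) (u : ℝ) (hu : 0 ≤ u) :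
    ‖EE μ a u‖ ≤ 2 / ‖a + μ‖ * Real.exp (c * u) := by
  unfold EE
  rw [max_eq_left hu, norm_div, div_mul_eq_mul_div]
  gcongr
  refine (norm_sub_le _ _).trans ?_
  rw [Complex.norm_exp, Complex.norm_exp]
  have h1 : (a * (u:ℝ)).re ≤ c * u := by simp; gcongr
  have h2 : (-(μ:ℂ) * (u:ℝ)).re ≤ c * u := by
    simp
    have : 0 ≤ (c + μ) * u := by positivity
    linarith
  have h3 := Real.exp_le_exp.mpr h1
  have h4 := Real.exp_le_exp.mpr h2
  linarith

lemma EE_good (μ : ℝ) (hμ : 0 < μ) (a : ℂ) (ha : a.re ≤ 3 / 2) : Good (EE μ a) (2 / ‖a + μ‖) where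
  cont := by unfold EE; fun_prop
  zero u hu := by unfold EE; rw [max_eq_right hu]; simp
  bd u hu := EE_norm μ hμ a (3/2) (by norm_num) ha u hu

lemma EE_LT (μ : ℝ) (hμ : 0 < μ) (a : ℂ) (ha : a.re ≤ 3 / 2) (haμ : a + μ ≠ 0) (t : ℝ) :
    LT (EE μ a) t = 1 / (((2 + t * Complex.I) - a) * ((2 + t * Complex.I) + μ)) := by
  set s : ℂ := 2 + t * Complex.I with hs
  have hsre : s.re = 2 := by simp [hs]
  have h1 : (a - s).re < 0 := by simp [hsre]; linarith
  have h2 : (-μ - s).re < 0 := by simp [hsre]; linarith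
  have e : LT (EE μ a) t = ∫ u in Ioi (0:ℝ), (1 / (a + μ)) * (Complex.exp ((a - s) * u) - Complex.exp ((-μ - s) * u)) := by
    unfold LT
    rw [← MeasureTheory.integral_indicator measurableSet_Ioi]
    congr 1; funext u
    by_cases hu : u ∈ Ioi (0:ℝ)
    · rw [Set.indicator_of_mem hu]
      unfold EE
      rw [max_eq_left (le_of_lt hu), ← hs, sub_mul, sub_mul, Complex.exp_sub, Complex.exp_sub, neg_mul s,
        Complex.exp_neg]
      ring
    · rw [Set.indicator_of_notMem hu, (EE_good μ hμ a ha).zero u (by simpa using hu)]; simp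
  rw [e, MeasureTheory.integral_const_mul, MeasureTheory.integral_sub
    (integrableOn_exp_mul_complex_Ioi h1 0) (integrableOn_exp_mul_complex_Ioi h2 0),
    integral_exp_mul_complex_Ioi h1, integral_exp_mul_complex_Ioi h2]
  have n1 : s - a ≠ 0 := by
    intro h; have := congrArg Complex.re h; simp at this h1; linarith
  have n2 : s + μ ≠ 0 := by
    intro h; have := congrArg Complex.re h; simp at this h2; linarith
  have n3 : a - s ≠ 0 := by rw [← neg_sub]; exact neg_ne_zero.mpr n1
  have n4 : -μ - s ≠ 0 := by rw [← neg_add', add_comm]; exact neg_ne_zero.mpr n2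
  simp only [Complex.ofReal_zero, mul_zero, Complex.exp_zero]
  field_simp
  ring

instance zeros_countable : Countable {ρ : ℂ // xi ρ = 0} := by
  have : {ρ : ℂ | xi ρ = 0} ⊆ ⋃ n : ℕ, (ZR xi n : Set ℂ) := by
    intro ρ h
    obtain ⟨n, hn⟩ := exists_nat_ge ‖ρ‖
    exact mem_iUnion.mpr ⟨n, by
      rw [Finset.mem_coe, mem_ZR xi xi_diff xi_zero_ne]; exact ⟨h, hn⟩⟩
  exact ((countable_iUnion fun n : ℕ => (ZR xi n).countable_toSet).mono this).to_subtype

/-- trivial zero data -/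
def TrivOK (μ : ℝ) : Prop := ∀ n : ℕ, 1 ≤ |μ - 2 * ((n:ℝ) + 1)|

lemma triv_norm (μ : ℝ) (n : ℕ) : ‖(-2 * ((n:ℂ) + 1) + μ : ℂ)‖ = |μ - 2 * ((n:ℝ) + 1)| := by
  have : (-2 * ((n:ℂ) + 1) + μ : ℂ) = ((μ - 2 * ((n:ℝ) + 1) : ℝ) : ℂ) := by push_cast; ring
  rw [this, Complex.norm_real, Real.norm_eq_abs]

lemma triv_bd (μ : ℝ) (hμ : 1 ≤ μ) (h : TrivOK μ) (n : ℕ) :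
    ‖(1 / ((n:ℂ) + 1) : ℂ)‖ * (2 / ‖(-2 * ((n:ℂ) + 1) + μ : ℂ)‖) ≤ (1 + μ) * (1 / ((n:ℝ) + 1) ^ 2) := by
  rw [triv_norm μ]
  have e : ‖(1 / ((n:ℂ) + 1) : ℂ)‖ = 1 / ((n:ℝ) + 1) := by
    rw [norm_div, norm_one]
    have : ((n:ℂ) + 1) = ((n + 1 : ℕ) : ℂ) := by push_cast; ring
    rw [this, Complex.norm_natCast]; push_cast; ring
  rw [e]
  have h1 := h n
  set y := |μ - 2 * ((n:ℝ) + 1)| with hy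
  have h2 : 2 * ((n:ℝ) + 1) ≤ y * (1 + μ) := by
    have : 2 * ((n:ℝ) + 1) - μ ≤ y := by rw [hy, abs_sub_comm]; exact le_abs_self _
    nlinarith
  have hn : (0:ℝ) < (n:ℝ) + 1 := by positivity
  have hy0 : 0 < y := by linarith
  rw [div_mul_div_comm, mul_one_div, div_le_div_iff₀ (by positivity) (by positivity)]
  have := mul_le_mul_of_nonneg_right h2 hn.le
  nlinarith

/-- prime sum -/
noncomputable def f1 (μ u : ℝ) : ℂ :=
  ∑' n : ℕ, ((ArithmeticFunction.vonMangoldt n : ℝ) : ℂ) * EE μ 0 (u - Real.log n)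
/-- zero sum -/
noncomputable def f2 (μ u : ℝ) : ℂ :=
  ∑' ρ : {ρ : ℂ // xi ρ = 0}, ((mz ρ : ℂ) / ρ) * EE μ ρ u
/-- trivial zero sum -/
noncomputable def f3 (μ u : ℝ) : ℂ :=
  ∑' n : ℕ, (1 / ((n:ℂ) + 1)) * EE μ (-2 * ((n:ℂ) + 1)) u

lemma f1_good (μ : ℝ) (hμ : 1 ≤ μ) : (∃ B, Good (f1 μ) B) ∧ ∀ t,
    LT (f1 μ) t = -(deriv riemannZeta (2 + t * Complex.I) / riemannZeta (2 + t * Complex.I)) /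
      ((2 + t * Complex.I) * ((2 + t * Complex.I) + μ)) := by
  have hg : ∀ n : ℕ, Good (fun u => ((ArithmeticFunction.vonMangoldt n : ℝ) : ℂ) * EE μ 0 (u - Real.log n))
      (‖((ArithmeticFunction.vonMangoldt n : ℝ) : ℂ)‖ * (2 / ‖(0:ℂ) + μ‖ * Real.exp (-(3/2) * Real.log n))) :=
    fun n => ((EE_good μ (by linarith) 0 (by rw [Complex.zero_re]; norm_num)).shift _ (Real.log_natCast_nonneg n)).cmul _
  have hsum : Summable (fun n : ℕ => ‖((ArithmeticFunction.vonMangoldt n : ℝ) : ℂ)‖ * (2 / ‖(0:ℂ) + μ‖ * Real.exp (-(3/2) * Real.log n))) := by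
    have := (ArithmeticFunction.LSeriesSummable_vonMangoldt (s := ((3/2:ℝ):ℂ)) (by rw [Complex.ofReal_re]; norm_num)).norm
    refine (this.mul_left (2 / ‖(0:ℂ) + μ‖)).congr ?_
    intro n
    rcases eq_or_ne n 0 with rfl | hn
    · simp
    · rw [LSeries.term_of_ne_zero hn, norm_div, Complex.norm_natCast_cpow_of_pos (Nat.pos_of_ne_zero hn),
        Complex.ofReal_re, Real.rpow_def_of_pos (by positivity), neg_mul, Real.exp_neg, mul_comm (Real.log n)]
      ring
  obtain ⟨h1, h2, h3⟩ := Good.sum hg hsum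
  refine ⟨⟨_, h1⟩, fun t => ?_⟩
  rw [show LT (f1 μ) t = _ from (h3 t).tsum_eq.symm, ← neg_div, ← ArithmeticFunction.LSeries_vonMangoldt_eq_deriv_riemannZeta_div (by simp), LSeries, div_eq_mul_inv,
    ← tsum_mul_right]
  refine tsum_congr fun n => ?_
  rw [LT_cmul, LT_shift, EE_LT μ (by linarith) 0 (by rw [Complex.zero_re]; norm_num) (by simpa using (show μ ≠ 0 by linarith))]
  rcases eq_or_ne n 0 with rfl | hn
  · simp
  · rw [LSeries.term_of_ne_zero hn, Complex.cpow_def_of_ne_zero (by exact_mod_cast hn), neg_mul, Complex.exp_neg,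
      ← Complex.natCast_log, mul_comm ((Real.log n : ℝ) : ℂ), sub_zero]
    ring

lemma f2_good (hRH : RiemannHypothesis) (μ : ℝ) (hμ : 1 ≤ μ) : (∃ B, Good (f2 μ) B) ∧
    (∀ u, Summable (fun ρ : {ρ : ℂ // xi ρ = 0} => ((mz ρ : ℂ) / ρ) * EE μ ρ u)) ∧ ∀ t,
    LT (f2 μ) t = (logDeriv xi (2 + t * Complex.I) - logDeriv xi 0) /
      ((2 + t * Complex.I) * ((2 + t * Complex.I) + μ)) := by
  have hg : ∀ ρ : {ρ : ℂ // xi ρ = 0}, Good (fun u => ((mz ρ : ℂ) / ρ) * EE μ ρ u)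
      (‖((mz ρ : ℂ) / ρ)‖ * (2 / ‖(ρ:ℂ) + μ‖)) :=
    fun ρ => (EE_good μ (by linarith) ρ (by rw [xi_zero_re hRH ρ ρ.2]; norm_num)).cmul _
  have hsum : Summable (fun ρ : {ρ : ℂ // xi ρ = 0} => (‖((mz ρ : ℂ) / ρ)‖ * (2 / ‖(ρ:ℂ) + μ‖))) := by
    have := ((summable_term hRH (s := -(μ:ℂ)) (by simp; rw [abs_of_neg (by linarith)]; linarith)).subtype {ρ : ℂ | xi ρ = 0}).mul_left 2
    refine this.congr ?_
    intro ρ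
    simp only [Function.comp]
    rw [norm_div, Complex.norm_real, Real.norm_of_nonneg (mz_nonneg _), ← neg_add', norm_neg, add_comm (μ:ℂ)]
    ring
  obtain ⟨h1, h2, h3⟩ := Good.sum hg hsum
  refine ⟨⟨_, h1⟩, h2, fun t => ?_⟩
  set s : ℂ := 2 + t * Complex.I with hs
  have hh := hadamard_hasSum hRH (s := s) (by simp [hs]; norm_num)
  have hsupp : Function.support (fun ρ : ℂ => (mz ρ:ℂ)*(s/(ρ*(s-ρ)))) ⊆ {ρ : ℂ | xi ρ = 0} := by
    intro ρ h
    by_contra h'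
    exact h (by simp [mz_eq_zero h'])
  have hh2 := (hasSum_subtype_iff_of_support_subset hsupp).mpr hh
  rw [div_eq_mul_inv]
  refine (h3 t).unique ?_
  have hh3 := hh2.mul_right ((s * (s + μ))⁻¹)
  have e : (fun i : {ρ : ℂ // xi ρ = 0} => LT (fun u => ((mz i : ℂ) / i) * EE μ i u) t) = fun i : {ρ : ℂ // xi ρ = 0} =>
      ((fun ρ : ℂ => (mz ρ:ℂ)*(s/(ρ*(s-ρ)))) ∘ Subtype.val) i * ((s * (s + μ))⁻¹) := by
    funext ρ
    have hs0 : s ≠ 0 := by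
      intro h; have := congrArg Complex.re h; simp [hs] at this
    rw [LT_cmul, EE_LT μ (by linarith) ρ (by rw [xi_zero_re hRH ρ ρ.2]; norm_num)
      (by intro h; have := congrArg Complex.re h; simp [xi_zero_re hRH ρ ρ.2] at this; linarith)]
    simp only [Function.comp, ← hs]
    field_simp
  rw [e]
  exact hh3

lemma f3_good (μ : ℝ) (hμ : 1 ≤ μ) (htr : TrivOK μ) : (∃ B, Good (f3 μ) B) ∧
    ∀ t, LT (f3 μ) t = (Complex.digamma ((2 + t * Complex.I) / 2 + 1) + eulerMascheroniConstant) /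
      ((2 + t * Complex.I) * ((2 + t * Complex.I) + μ)) := by
  have hre : ∀ n : ℕ, (-2 * ((n:ℂ) + 1)).re ≤ 0 := by
    intro n; simp; positivity
  have hg : ∀ n : ℕ, Good (fun u => (1 / ((n:ℂ) + 1)) * EE μ (-2 * ((n:ℂ) + 1)) u)
      (‖(1 / ((n:ℂ) + 1))‖ * (2 / ‖(-2 * ((n:ℂ) + 1)) + μ‖)) :=
    fun n => (EE_good μ (by linarith) _ ((hre n).trans (by norm_num))).cmul _
  have hsum : Summable (fun n : ℕ => (‖(1 / ((n:ℂ) + 1))‖ * (2 / ‖(-2 * ((n:ℂ) + 1)) + (μ:ℂ)‖))) := by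
    refine Summable.of_nonneg_of_le (fun n => by positivity) (fun n => triv_bd μ hμ htr n)
      (summable_inv_sq_succ.mul_left _)
  obtain ⟨h1, h2, h3⟩ := Good.sum hg hsum
  refine ⟨⟨_, h1⟩, fun t => ?_⟩
  set s : ℂ := 2 + t * Complex.I with hs
  have hs0 : s ≠ 0 := by
    intro h; have := congrArg Complex.re h; simp [hs] at this
  rw [show LT (f3 μ) t = _ from (h3 t).tsum_eq.symm, digamma_series s (by simp [hs]), div_eq_mul_inv]
  rw [show (-(eulerMascheroniConstant : ℂ) + ∑' n : ℕ, s / (((n:ℂ) + 1) * (2 * (n + 1) + s)) + (eulerMascheroniConstant : ℂ)) =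
    ∑' n : ℕ, s / (((n:ℂ) + 1) * (2 * (n + 1) + s)) by ring, ← tsum_mul_right]
  refine tsum_congr fun n => ?_
  rw [LT_cmul, EE_LT μ (by linarith) _ ((hre n).trans (by norm_num)), ← hs]
  · have : s - -2 * ((n:ℂ) + 1) = 2 * (n + 1) + s := by ring
    rw [this]
    field_simp
  · rw [← norm_pos_iff, triv_norm μ]
    linarith [htr n]

/-- constant in the explicit formula -/
noncomputable def c0 : ℝ := -(Real.log π) / 2 - eulerMascheroniConstant / 2 + XX (1/2)

theorem explicit (hRH : RiemannHypothesis) (μ : ℝ) (hμ : 1 ≤ μ) (htr : TrivOK μ) (u : ℝ) :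
    f1 μ u = ((c0:ℂ) - 1) * EE μ 0 u + EE μ 1 u + -1 * f2 μ u + (1/2) * f3 μ u := by
  obtain ⟨⟨B1, g1⟩, l1⟩ := f1_good μ hμ
  obtain ⟨⟨B2, g2⟩, -, l2⟩ := f2_good hRH μ hμ
  obtain ⟨⟨B3, g3⟩, l3⟩ := f3_good μ hμ htr
  have gE0 := EE_good μ (by linarith) 0 (by rw [Complex.zero_re]; norm_num)
  have gE1 := EE_good μ (by linarith) 1 (by simp; norm_num)
  have G1 := gE0.cmul ((c0:ℂ) - 1)
  have G2 := G1.add gE1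
  have G3 := G2.add (g2.cmul (-1))
  have G4 := G3.add (g3.cmul (1/2))
  have key := LT_unique g1 G4 (fun t => ?_)
  · exact congrFun key u
  rw [G3.LT_add (g3.cmul (1/2)), G2.LT_add (g2.cmul (-1)), G1.LT_add gE1, LT_cmul, LT_cmul, LT_cmul,
    l1, l2, l3, EE_LT μ (by linarith) 0 (by rw [Complex.zero_re]; norm_num) (by simpa using (show μ ≠ 0 by linarith)),
    EE_LT μ (by linarith) 1 (by simp; norm_num) (by
      intro h; have := congrArg Complex.re h; simp at this; linarith)]
  set s : ℂ := 2 + t * Complex.I with hs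
  have hsre : s.re = 2 := by simp [hs]
  rw [logDeriv_xi s (by rw [hsre]; norm_num), logDeriv_xi_zero]
  have n0 : s ≠ 0 := by
    intro h; have := congrArg Complex.re h; simp [hsre] at this
  have n1 : s - 1 ≠ 0 := by
    intro h; have := congrArg Complex.re h; simp [hsre] at this; norm_num at this
  have n2 : s + μ ≠ 0 := by
    intro h; have := congrArg Complex.re h; simp [hsre] at this; linarith
  have n3 : riemannZeta s ≠ 0 := riemannZeta_ne_zero_of_one_lt_re (by rw [hsre]; norm_num)
  unfold c0
  push_cast
  rw [sub_zero]
  field_simp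
  ring

lemma f3_bd (μ : ℝ) (hμ : 1 ≤ μ) (htr : TrivOK μ) (u : ℝ) (hu : 0 ≤ u) :
    ‖f3 μ u‖ ≤ (1 + μ) * ∑' n : ℕ, 1 / ((n:ℝ) + 1) ^ 2 := by
  refine tsum_of_norm_bounded (summable_inv_sq_succ.hasSum.mul_left _) fun n => ?_
  refine le_trans ?_ (triv_bd μ hμ htr n)
  rw [norm_mul]
  have := EE_norm μ (by linarith) (-2 * ((n:ℂ) + 1)) 0 le_rfl (by simp; positivity) u hu
  rw [zero_mul, Real.exp_zero, mul_one] at this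
  gcongr

end SP


namespace SP

/-- weighted integral of `ψ(t) - t` -/
noncomputable def J (m : ℕ) (x : ℝ) : ℝ := ∫ t in (1:ℝ)..x, (Chebyshev.psi t - t) * t ^ m

lemma psi_intervalIntegrable (a b : ℝ) : IntervalIntegrable Chebyshev.psi MeasureTheory.volume a b :=
  Chebyshev.psi_mono.intervalIntegrable

lemma J_intble (m : ℕ) (a b : ℝ) :
    IntervalIntegrable (fun t => (Chebyshev.psi t - t) * t ^ m) MeasureTheory.volume a b :=
  ((psi_intervalIntegrable a b).sub (continuous_id.intervalIntegrable a b)).mul_continuousOn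
    (by fun_prop)

lemma EE_zero_real (μ v : ℝ) : EE μ 0 v = (((1 - Real.exp (-μ * max v 0)) / μ : ℝ) : ℂ) := by
  unfold EE; push_cast; simp

lemma exp_neg_mul_log (m : ℕ) (x : ℝ) (hx : 0 < x) :
    Real.exp (-((m + 1 : ℕ) : ℝ) * Real.log x) = (x ^ (m + 1))⁻¹ := by
  rw [neg_mul, Real.exp_neg, mul_comm, Real.exp_mul, Real.exp_log hx, Real.rpow_natCast]

lemma f1_eq (m : ℕ) (x : ℝ) (hx : 1 ≤ x) : f1 ((m + 1 : ℕ) : ℝ) (Real.log x) =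
    ((∑ n ∈ Finset.Icc 0 ⌊x⌋₊, ArithmeticFunction.vonMangoldt n *
      ((1 - (n:ℝ) ^ (m + 1) * (x ^ (m + 1))⁻¹) / ((m + 1 : ℕ) : ℝ)) : ℝ) : ℂ) := by
  unfold f1
  rw [tsum_eq_sum (s := Finset.Icc 0 ⌊x⌋₊)]
  · rw [Complex.ofReal_sum]
    refine Finset.sum_congr rfl fun n hn => ?_
    rcases Nat.eq_zero_or_pos n with rfl | hn0
    · simp
    have hnx : (n:ℝ) ≤ x := (Nat.le_floor_iff (by linarith)).mp (Finset.mem_Icc.mp hn).2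
    have hn1 : (0:ℝ) < n := by exact_mod_cast hn0
    rw [EE_zero_real, max_eq_left (sub_nonneg.mpr (Real.log_le_log hn1 hnx)), mul_sub, Real.exp_sub,
      exp_neg_mul_log m x (by linarith), exp_neg_mul_log m n hn1]
    push_cast
    congr 3
    rw [div_inv_eq_mul, mul_comm]
  · intro n hn
    have hnx : ⌊x⌋₊ < n := by simpa using hn
    have : x < n := (Nat.floor_lt (by linarith)).mp hnx
    rw [EE_zero_real, max_eq_right (sub_nonpos.mpr (Real.log_le_log (by linarith) this.le))]
    simp

lemma abel_psi (m : ℕ) (x : ℝ) (hx : 1 ≤ x) :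
    ∑ n ∈ Finset.Icc 0 ⌊x⌋₊, (n:ℝ) ^ (m + 1) * ArithmeticFunction.vonMangoldt n =
      x ^ (m + 1) * Chebyshev.psi x - ((m + 1 : ℕ) : ℝ) * ∫ t in (1:ℝ)..x, Chebyshev.psi t * t ^ m := by
  have := sum_mul_eq_sub_integral_mul₀ (f := fun t : ℝ => t ^ (m + 1))
    (c := fun n => ArithmeticFunction.vonMangoldt n) (by simp) x
    (fun t _ => by fun_prop) (by
      have : deriv (fun t : ℝ => t ^ (m + 1)) = fun t => ((m + 1 : ℕ) : ℝ) * t ^ m := by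
        funext t; simp
      rw [this]
      exact (Continuous.continuousOn (by fun_prop)).integrableOn_Icc)
  rw [this, Chebyshev.psi_eq_sum_Icc, intervalIntegral.integral_of_le hx, ← MeasureTheory.integral_const_mul]
  congr 1
  refine MeasureTheory.integral_congr_ae (Eventually.of_forall fun t => ?_)
  simp only [Chebyshev.psi_eq_sum_Icc]
  simp
  ring

lemma f1_eq_int (m : ℕ) (x : ℝ) (hx : 1 ≤ x) : f1 ((m + 1 : ℕ) : ℝ) (Real.log x) =
    (((x ^ (m + 1))⁻¹ * ∫ t in (1:ℝ)..x, Chebyshev.psi t * t ^ m : ℝ) : ℂ) := by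
  rw [f1_eq m x hx]
  congr 1
  have hxp : (x ^ (m + 1)) ≠ 0 := by positivity
  have hm : ((m + 1 : ℕ) : ℝ) ≠ 0 := by positivity
  have h := abel_psi m x hx
  have e : ∑ n ∈ Finset.Icc 0 ⌊x⌋₊, ArithmeticFunction.vonMangoldt n *
      ((1 - (n:ℝ) ^ (m + 1) * (x ^ (m + 1))⁻¹) / ((m + 1 : ℕ) : ℝ)) =
      (((m + 1 : ℕ) : ℝ))⁻¹ * (Chebyshev.psi x - (x ^ (m + 1))⁻¹ *
        ∑ n ∈ Finset.Icc 0 ⌊x⌋₊, (n:ℝ) ^ (m + 1) * ArithmeticFunction.vonMangoldt n) := by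
    rw [Chebyshev.psi_eq_sum_Icc, Finset.mul_sum, ← Finset.sum_sub_distrib, Finset.mul_sum]
    refine Finset.sum_congr rfl fun n _ => ?_
    ring
  rw [e, h]
  field_simp
  ring

lemma EE_one_eq (m : ℕ) (x : ℝ) (hx : 1 ≤ x) : EE ((m + 1 : ℕ) : ℝ) 1 (Real.log x) =
    (((x ^ (m + 1))⁻¹ * ∫ t in (1:ℝ)..x, t * t ^ m : ℝ) : ℂ) := by
  have e : EE ((m + 1 : ℕ) : ℝ) 1 (Real.log x) = (((Real.exp (Real.log x) -
      Real.exp (-((m + 1 : ℕ) : ℝ) * Real.log x)) / (1 + ((m + 1 : ℕ) : ℝ)) : ℝ) : ℂ) := by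
    unfold EE
    rw [max_eq_left (Real.log_nonneg hx)]; push_cast; simp
  rw [e, exp_neg_mul_log m x (by linarith), Real.exp_log (by linarith)]
  congr 1
  have : ∀ t : ℝ, t * t ^ m = t ^ (m + 1) := fun t => by ring
  simp only [this]
  rw [integral_pow]
  have hxp : (x ^ (m + 1)) ≠ 0 := by positivity
  push_cast
  have : (m:ℝ) + 1 + 1 ≠ 0 := by positivity
  have : 1 + ((m:ℝ) + 1) ≠ 0 := by positivity
  field_simp
  ring

theorem J_eq (hRH : RiemannHypothesis) (m : ℕ) (htr : TrivOK ((m + 1 : ℕ) : ℝ)) (x : ℝ) (hx : 1 ≤ x) :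
    (((x ^ (m + 1))⁻¹ * J m x : ℝ) : ℂ) = ((c0:ℂ) - 1) * EE ((m + 1 : ℕ) : ℝ) 0 (Real.log x)
      - f2 ((m + 1 : ℕ) : ℝ) (Real.log x) + (1/2) * f3 ((m + 1 : ℕ) : ℝ) (Real.log x) := by
  have h := explicit hRH ((m + 1 : ℕ) : ℝ) (by push_cast; linarith [Nat.cast_nonneg (α := ℝ) m]) htr (Real.log x)
  rw [f1_eq_int m x hx, EE_one_eq m x hx] at h
  have e : J m x = (∫ t in (1:ℝ)..x, Chebyshev.psi t * t ^ m) - ∫ t in (1:ℝ)..x, t * t ^ m := by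
    unfold J
    rw [← intervalIntegral.integral_sub]
    · simp only [sub_mul]
    · exact (psi_intervalIntegrable 1 x).mul_continuousOn (by fun_prop)
    · exact Continuous.intervalIntegrable (by fun_prop) _ _
  rw [e]
  push_cast at h ⊢
  linear_combination h

lemma trivOK_odd (j : ℕ) : TrivOK ((2 * j + 1 : ℕ) : ℝ) := by
  intro n
  have : (1:ℤ) ≤ |((2 * j + 1 : ℕ) : ℤ) - 2 * ((n:ℤ) + 1)| := by
    apply Int.one_le_abs; omega
  exact_mod_cast this

lemma XX_half_nonneg (hRH : RiemannHypothesis) : 0 ≤ XX (1/2) := by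
  refine (zero_hasSum hRH (1/2) (by norm_num)).nonneg fun ρ => ?_
  have := mz_nonneg ρ
  positivity

lemma c0_bd (hRH : RiemannHypothesis) : ‖((c0:ℂ) - 1)‖ ≤ 3 := by
  have h1 := XX_half_nonneg hRH
  have h2 := XX_half_le
  have h3 := Real.one_half_lt_eulerMascheroniConstant
  have h4 := Real.eulerMascheroniConstant_lt_two_thirds
  have h5 := log_pi_ge
  have h6 : Real.log π ≤ 2 := by
    have : Real.log π ≤ Real.log 4 := Real.log_le_log Real.pi_pos Real.pi_le_four
    have e : Real.log 4 = 2 * Real.log 2 := by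
      rw [show (4:ℝ) = 2 ^ 2 by norm_num, Real.log_pow]; norm_num
    have := Real.log_two_lt_d9
    linarith
  rw [← Complex.ofReal_one, ← Complex.ofReal_sub, Complex.norm_real, Real.norm_eq_abs, abs_le]
  unfold c0
  constructor <;> linarith

lemma tsum_sq_le : ∑' n : ℕ, 1 / ((n:ℝ) + 1) ^ 2 ≤ 2 := by
  have h := hasSum_zeta_two
  have h2 := h.summable.tsum_eq_zero_add
  rw [h.tsum_eq] at h2
  push_cast at h2
  have h3 := Real.pi_lt_d2
  have h4 := Real.pi_pos
  simp at h2 ⊢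
  rw [← h2]
  nlinarith

lemma err_bd (hRH : RiemannHypothesis) (μ : ℝ) (hμ : 1 ≤ μ) (htr : TrivOK μ) (u : ℝ) (hu : 0 ≤ u) :
    ‖((c0:ℂ) - 1) * EE μ 0 u + (1/2) * f3 μ u‖ ≤ μ + 7 := by
  refine (norm_add_le _ _).trans ?_
  rw [norm_mul, norm_mul]
  have h1 := c0_bd hRH
  have h2 := EE_norm μ (by linarith) 0 0 le_rfl (by simp) u hu
  rw [zero_mul, Real.exp_zero, mul_one, zero_add, Complex.norm_real, Real.norm_of_nonneg (by linarith)] at h2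
  have h2' : ‖EE μ 0 u‖ ≤ 2 := h2.trans (by rw [div_le_iff₀ (by linarith)]; linarith)
  have h3 := f3_bd μ hμ htr u hu
  have h4 := tsum_sq_le
  have h5 : ‖(1/2:ℂ)‖ = 1/2 := by norm_num
  rw [h5]
  have : ‖(c0:ℂ) - 1‖ * ‖EE μ 0 u‖ ≤ 3 * 2 := mul_le_mul h1 h2' (norm_nonneg _) (by norm_num)
  nlinarith

lemma EE_rho (hRH : RiemannHypothesis) (μ : ℝ) {ρ : ℂ} (h : xi ρ = 0) (x : ℝ) (hx : 1 ≤ x) :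
    EE μ ρ (Real.log x) = ((√x : ℝ) * Complex.exp (Complex.I * ρ.im * Real.log x) -
      (Real.exp (-μ * Real.log x) : ℝ)) / (ρ + μ) := by
  unfold EE
  rw [max_eq_left (Real.log_nonneg hx)]
  have h1 : ρ = (1/2 : ℝ) + Complex.I * ρ.im := by
    apply Complex.ext <;> simp [xi_zero_re hRH ρ h]
  have h2 : Complex.exp (ρ * (Real.log x : ℝ)) =
      (√x : ℝ) * Complex.exp (Complex.I * ρ.im * Real.log x) := by
    have : (√x : ℝ) = Real.exp (1/2 * Real.log x) := by
      rw [Real.sqrt_eq_rpow, Real.rpow_def_of_pos (by linarith), mul_comm]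
    rw [this, Complex.ofReal_exp, ← Complex.exp_add]
    congr 1
    nth_rw 1 [h1]
    push_cast; ring
  rw [h2]
  push_cast
  rfl

lemma norm_add_mu (hRH : RiemannHypothesis) (μ : ℝ) (hμ : 0 ≤ μ) {ρ : ℂ} (h : xi ρ = 0) : ‖ρ‖ ≤ ‖ρ + μ‖ := by
  rw [Complex.norm_def, Complex.norm_def]
  apply Real.sqrt_le_sqrt
  rw [Complex.normSq_apply, Complex.normSq_apply]
  have := xi_zero_re hRH ρ h
  simp [this]
  nlinarith

lemma S_sub (hRH : RiemannHypothesis) :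
    HasSum (fun ρ : {ρ : ℂ // xi ρ = 0} => mz ρ / ‖(ρ:ℂ)‖ ^ 2) (2 * XX (1/2)) := by
  have hsupp : Function.support (fun ρ : ℂ => mz ρ / ‖(ρ:ℂ)‖ ^ 2) ⊆ {ρ : ℂ | xi ρ = 0} := by
    intro ρ h
    by_contra h'
    exact h (by simp [mz_eq_zero h'])
  exact (hasSum_subtype_iff_of_support_subset hsupp).mpr (S_hasSum hRH)

lemma exp_neg_le_one (μ : ℝ) (hμ : 0 ≤ μ) (x : ℝ) (hx : 1 ≤ x) : Real.exp (-μ * Real.log x) ≤ 1 := by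
  rw [Real.exp_le_one_iff]
  have := Real.log_nonneg hx
  nlinarith [mul_nonneg hμ this]

lemma norm_exp_I (a b : ℝ) : ‖Complex.exp (Complex.I * a * b)‖ = 1 := by
  rw [Complex.norm_exp]; simp

lemma f2_bd (hRH : RiemannHypothesis) (μ : ℝ) (hμ : 1 ≤ μ) (x : ℝ) (hx : 1 ≤ x) :
    ‖f2 μ (Real.log x)‖ ≤ 0.2 * (√x + 1) := by
  have h := (S_sub hRH).mul_right (√x + 1)
  refine (tsum_of_norm_bounded h fun ρ => ?_).trans ?_
  · rw [EE_rho hRH μ ρ.2 x hx, norm_mul, norm_div, norm_div, Complex.norm_real,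
      Real.norm_of_nonneg (mz_nonneg _)]
    have h0 : 0 < ‖(ρ:ℂ)‖ := norm_pos_iff.mpr (by
      intro h; have := xi_zero_re hRH ρ ρ.2; rw [h] at this; norm_num at this)
    have h1 := norm_add_mu hRH μ (by linarith) ρ.2
    have h2 : ‖((√x : ℝ) * Complex.exp (Complex.I * (ρ:ℂ).im * Real.log x) -
      (Real.exp (-μ * Real.log x) : ℝ) : ℂ)‖ ≤ √x + 1 := by
      refine (norm_sub_le _ _).trans ?_
      rw [norm_mul, norm_exp_I, Complex.norm_real, Complex.norm_real, Real.norm_of_nonneg (Real.sqrt_nonneg _),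
        Real.norm_of_nonneg (Real.exp_pos _).le]
      linarith [exp_neg_le_one μ (by linarith) x hx]
    have hm := mz_nonneg (ρ:ℂ)
    calc _ ≤ mz ρ / ‖(ρ:ℂ)‖ * ((√x + 1) / ‖(ρ:ℂ)‖) := by gcongr
      _ = _ := by field_simp
  · have := XX_half_le
    have : 0 ≤ √x := Real.sqrt_nonneg x
    nlinarith

theorem J_bd (hRH : RiemannHypothesis) (m : ℕ) (htr : TrivOK ((m + 1 : ℕ) : ℝ)) (x : ℝ) (hx : 1 ≤ x) :
    |J m x| ≤ x ^ (m + 1) * (0.2 * √x + (m + 9)) := by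
  have hμ : (1:ℝ) ≤ ((m + 1 : ℕ) : ℝ) := by push_cast; linarith [Nat.cast_nonneg (α := ℝ) m]
  have h := J_eq hRH m htr x hx
  have h1 := err_bd hRH _ hμ htr _ (Real.log_nonneg hx)
  have h2 := f2_bd hRH _ hμ x hx
  have h3 : |(x ^ (m + 1))⁻¹ * J m x| ≤ 0.2 * √x + (m + 9) := by
    rw [← Real.norm_eq_abs, ← Complex.norm_real, h]
    rw [show ∀ a b c : ℂ, a - b + c = (a + c) - b by intros; ring]
    refine (norm_sub_le _ _).trans ?_
    push_cast at *
    linarith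
  have hxp : 0 < x ^ (m + 1) := by positivity
  rw [abs_mul, abs_of_pos (inv_pos.mpr hxp), inv_mul_le_iff₀ hxp] at h3
  exact h3

theorem J_good (hRH : RiemannHypothesis) (x : ℝ) (hx : 1 ≤ x)
    (hgood : ∀ ρ : ℂ, xi ρ = 0 → |ρ.im| ≤ 50000 →
      ‖Complex.exp (Complex.I * ρ.im * Real.log x) - 1‖ ≤ 0.0001) :
    x ^ 999 * (1.9 * √x - 1100000) ≤ 999 * J 998 x := by
  have htr : TrivOK ((998 + 1 : ℕ) : ℝ) := trivOK_odd 499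
  have h := J_eq hRH 998 htr x hx
  have h1 := err_bd hRH _ (by norm_num) htr _ (Real.log_nonneg hx)
  norm_num only at h h1
  set μ : ℝ := 999 with hμ
  set Q : ℂ := logDeriv xi (-(μ:ℂ)) - logDeriv xi 0 with hQ
  have hQre : Q.re ≤ -2.3 := by
    have e : logDeriv xi (-(μ:ℂ)) = -logDeriv xi (1/2 + ((999.5:ℝ):ℂ)) := by
      rw [← logDeriv_xi_one_sub]; congr 1; rw [hμ]; push_cast; norm_num
    rw [hQ, e, logDeriv_xi_zero, Complex.sub_re, Complex.neg_re, Complex.neg_re, Complex.ofReal_re]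
    have a1 := XX_half_le
    have a2 := XX_mu_ge
    unfold XX at a2 ⊢
    unfold XX at a1
    linarith
  have hQs : HasSum (fun ρ : {ρ : ℂ // xi ρ = 0} => (mz ρ : ℂ) * (-(μ:ℂ) / (ρ * (-(μ:ℂ) - ρ)))) Q := by
    have hsupp : Function.support (fun ρ : ℂ => (mz ρ : ℂ) * (-(μ:ℂ) / (ρ * (-(μ:ℂ) - ρ)))) ⊆ {ρ : ℂ | xi ρ = 0} := by
      intro ρ h
      by_contra h'
      exact h (by simp [mz_eq_zero h'])
    refine (hasSum_subtype_iff_of_support_subset hsupp).mpr (hadamard_hasSum hRH (s := -(μ:ℂ)) ?_)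
    simp [hμ]; norm_num [abs_of_neg]
  have hf2 : HasSum (fun ρ : {ρ : ℂ // xi ρ = 0} => ((mz ρ : ℂ) / ρ) * EE μ ρ (Real.log x)) (f2 μ (Real.log x)) :=
    ((f2_good hRH μ (by norm_num [hμ])).2.1 _).hasSum
  set w : ℝ := √x - Real.exp (-μ * Real.log x) with hw
  have hErr := (hf2.mul_left (μ:ℂ)).sub (hQs.mul_left (w:ℂ))
  have hT := (zero_hasSum hRH 50000 (by norm_num)) 
  have hTs : HasSum (fun ρ : {ρ : ℂ // xi ρ = 0} => mz ρ * (50000 / (50000 ^ 2 + (ρ:ℂ).im ^ 2))) (XX 50000) := by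
    have hsupp : Function.support (fun ρ : ℂ => mz ρ * (50000 / (50000 ^ 2 + (ρ:ℂ).im ^ 2))) ⊆ {ρ : ℂ | xi ρ = 0} := by
      intro ρ h
      by_contra h'
      exact h (by simp [mz_eq_zero h'])
    exact (hasSum_subtype_iff_of_support_subset hsupp).mpr hT
  have hB := (((S_sub hRH).mul_left (999 * 0.0001)).add (hTs.mul_left (999 * 2 * (2 / 50000)))).mul_left √x
  have hsq : 1 ≤ √x := by rw [Real.one_le_sqrt]; exact hx
  have hEb : ‖(μ:ℂ) * f2 μ (Real.log x) - (w:ℂ) * Q‖ ≤ √x * (999 * 0.0001 * (2 * XX (1/2)) + 999 * 2 * (2/50000) * XX 50000) := by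
    rw [← hErr.tsum_eq]
    refine tsum_of_norm_bounded hB fun ρ => ?_
    have hρ0 : (ρ:ℂ) ≠ 0 := by
      intro h; have := xi_zero_re hRH ρ ρ.2; rw [h] at this; norm_num at this
    have h0 : 0 < ‖(ρ:ℂ)‖ := norm_pos_iff.mpr hρ0
    have hn := norm_add_mu hRH μ (by norm_num [hμ]) ρ.2
    have hn0 : (ρ:ℂ) + μ ≠ 0 := norm_pos_iff.mp (by linarith)
    have hn1 : -(μ:ℂ) - ρ ≠ 0 := by rw [← neg_add', add_comm]; exact neg_ne_zero.mpr hn0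
    have hm := mz_nonneg (ρ:ℂ)
    have e : (μ:ℂ) * ((mz ρ : ℂ) / ρ * EE μ ρ (Real.log x)) - w * ((mz ρ : ℂ) * (-(μ:ℂ) / (ρ * (-(μ:ℂ) - ρ)))) =
        (μ * √x * mz ρ : ℝ) * (Complex.exp (Complex.I * (ρ:ℂ).im * Real.log x) - 1) / (ρ * (ρ + μ)) := by
      rw [EE_rho hRH μ ρ.2 x hx, hw]
      have : -(μ:ℂ) / (ρ * (-(μ:ℂ) - ρ)) = μ / (ρ * (ρ + μ)) := by
        rw [← neg_add', add_comm (μ:ℂ), mul_neg, neg_div_neg_eq]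
      rw [this]
      push_cast
      field_simp
      ring
    rw [e, norm_div, norm_mul, Complex.norm_real, Real.norm_of_nonneg (by positivity), norm_mul]
    set d := ‖Complex.exp (Complex.I * (ρ:ℂ).im * Real.log x) - 1‖ with hd
    have hd2 : d ≤ 2 := by
      refine (norm_sub_le _ _).trans ?_
      rw [norm_exp_I, norm_one]; norm_num
    have hd0 : 0 ≤ d := norm_nonneg _
    have hle : μ * √x * mz ρ * d / (‖(ρ:ℂ)‖ * ‖(ρ:ℂ) + μ‖) ≤ √x * (999 * (d * (mz ρ / ‖(ρ:ℂ)‖ ^ 2))) := by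
      calc _ ≤ μ * √x * mz ρ * d / (‖(ρ:ℂ)‖ * ‖(ρ:ℂ)‖) := by gcongr
        _ = _ := by rw [hμ]; field_simp
    refine hle.trans (mul_le_mul_of_nonneg_left ?_ (by positivity))
    have hA : 0 ≤ mz ρ / ‖(ρ:ℂ)‖ ^ 2 := by positivity
    have hC : 0 ≤ mz ρ * (50000 / (50000 ^ 2 + (ρ:ℂ).im ^ 2)) := by positivity
    rcases le_or_gt |(ρ:ℂ).im| 50000 with hc | hc
    · have := hgood ρ ρ.2 hc
      have := mul_le_mul_of_nonneg_right this hA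
      nlinarith
    · have ht := tail_le hRH 50000 (by norm_num) ρ hc
      have := mul_le_mul_of_nonneg_right hd2 hA
      nlinarith
  have hxp : 0 < x ^ 999 := by positivity
  have hre := congrArg Complex.re h
  rw [Complex.ofReal_re] at hre
  have hE1 := Complex.abs_re_le_norm ((μ:ℂ) * f2 μ (Real.log x) - (w:ℂ) * Q)
  have hE2 := Complex.abs_re_le_norm (((c0:ℂ) - 1) * EE μ 0 (Real.log x) + (1/2) * f3 μ (Real.log x))
  have e3 : ((μ:ℂ) * f2 μ (Real.log x) - (w:ℂ) * Q).re = 999 * (f2 μ (Real.log x)).re - w * Q.re := by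
    rw [Complex.sub_re, Complex.re_ofReal_mul, Complex.re_ofReal_mul]
  rw [e3] at hE1
  rw [Complex.add_re, Complex.sub_re] at hre
  rw [Complex.add_re] at hE2
  have b1 := abs_le.mp (hE1.trans hEb)
  have b2 := abs_le.mp (hE2.trans h1)
  have hw1 : √x - 1 ≤ w := by
    have := exp_neg_le_one μ (by norm_num [hμ]) x hx
    rw [hw]; linarith
  have hwQ : w * Q.re ≤ -2.3 * (√x - 1) := by nlinarith
  have a1 := XX_half_le
  have a3 := XX_big_le
  have hs : √x * (999 * 0.0001 * (2 * XX (1/2)) + 999 * 2 * (2/50000) * XX 50000) ≤ √x * 0.39 := by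
    apply mul_le_mul_of_nonneg_left _ (by linarith)
    linarith
  have key : 1.9 * √x - 1100000 ≤ 999 * ((x ^ 999)⁻¹ * J 998 x) := by
    rw [hre]; linarith [b1.2, b2.1]
  calc _ ≤ x ^ 999 * (999 * ((x ^ 999)⁻¹ * J 998 x)) := by gcongr
    _ = _ := by rw [hμ]; field_simp

end SP


namespace SP

lemma primePi_eq (x : ℝ) (hx : 0 ≤ x) : primePi x = Nat.primeCounting ⌊x⌋₊ := by
  unfold primePi
  have : {p : ℕ | p.Prime ∧ (p : ℝ) ≤ x} = ((Finset.range (⌊x⌋₊ + 1)).filter Nat.Prime : Set ℕ) := by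
    ext p
    simp only [Set.mem_ofPred_eq, Finset.coe_filter, Finset.mem_range, Nat.lt_succ_iff]
    rw [Nat.le_floor_iff hx]
    tauto
  rw [this, Nat.card_coe_set_eq, Set.ncard_coe_finset, Nat.primeCounting, Nat.primeCounting',
    Nat.count_eq_card_filter_range]

lemma log_pos_of {y : ℝ} (hy : 2 ≤ y) : 0.69 ≤ Real.log y := by
  have h1 := Real.log_two_gt_d9
  have h2 := Real.log_le_log (by norm_num) hy
  linarith

lemma Li_eq (x : ℝ) (hx : 2 ≤ x) :
    Li x = x / Real.log x - 2 / Real.log 2 + ∫ t in (2:ℝ)..x, 1 / Real.log t ^ 2 := by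
  have hne : ∀ t ∈ uIcc 2 x, t ≠ 0 ∧ Real.log t ≠ 0 := by
    intro t ht
    rw [uIcc_of_le hx] at ht
    have := log_pos_of ht.1
    exact ⟨by linarith [ht.1], by linarith⟩
  have hc : ContinuousOn Real.log (uIcc 2 x) := fun t ht =>
    (Real.continuousAt_log (hne t ht).1).continuousWithinAt
  have i1 : IntervalIntegrable (fun t => 1 / Real.log t) MeasureTheory.volume 2 x :=
    (continuousOn_const.div hc fun t ht => (hne t ht).2).intervalIntegrable
  have i2 : IntervalIntegrable (fun t => 1 / Real.log t ^ 2) MeasureTheory.volume 2 x :=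
    (continuousOn_const.div (hc.pow 2) fun t ht => pow_ne_zero _ (hne t ht).2).intervalIntegrable
  have h := intervalIntegral.integral_eq_sub_of_hasDerivAt (a := 2) (b := x)
    (f := fun t => t / Real.log t) (f' := fun t => 1 / Real.log t - 1 / Real.log t ^ 2) ?_ (i1.sub i2)
  · rw [intervalIntegral.integral_sub i1 i2] at h
    unfold Li
    linarith
  · intro t ht
    obtain ⟨h0, h1⟩ := hne t ht
    refine ((hasDerivAt_id t).div (Real.hasDerivAt_log h0) h1).congr_deriv ?_
    simp only [id]
    field_simp

/-- the weight -/
noncomputable def gw (y : ℝ) : ℝ := 1 / (y * Real.log y ^ 2)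
/-- derivative of the weight -/
noncomputable def gw' (y : ℝ) : ℝ := -(Real.log y ^ 2 + 2 * Real.log y) / (y * Real.log y ^ 2) ^ 2

lemma gw_deriv (y : ℝ) (hy : 2 ≤ y) : HasDerivAt gw (gw' y) y := by
  have h0 : y ≠ 0 := by linarith
  have h1 : Real.log y ≠ 0 := by linarith [log_pos_of hy]
  have := ((hasDerivAt_id y).mul ((Real.hasDerivAt_log h0).pow 2)).inv
    (mul_ne_zero h0 (pow_ne_zero 2 h1))
  unfold gw
  simp only [one_div]
  refine HasDerivAt.congr_deriv this ?_
  unfold gw'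
  simp
  field_simp

lemma log_contOn (x : ℝ) (hx : 2 ≤ x) : ContinuousOn Real.log (uIcc 2 x) := by
  intro t ht
  rw [uIcc_of_le hx] at ht
  exact (Real.continuousAt_log (by linarith [ht.1])).continuousWithinAt

lemma gw_ne (x : ℝ) (hx : 2 ≤ x) (t : ℝ) (ht : t ∈ uIcc 2 x) : t * Real.log t ^ 2 ≠ 0 := by
  rw [uIcc_of_le hx] at ht
  have h0 : t ≠ 0 := by linarith [ht.1]
  have h1 : Real.log t ≠ 0 := by linarith [log_pos_of ht.1]
  exact mul_ne_zero h0 (pow_ne_zero 2 h1)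

lemma gw_cont (x : ℝ) (hx : 2 ≤ x) : ContinuousOn gw (uIcc 2 x) :=
  continuousOn_const.div (continuousOn_id.mul ((log_contOn x hx).pow 2)) (gw_ne x hx)

lemma gw'_cont (x : ℝ) (hx : 2 ≤ x) : ContinuousOn gw' (uIcc 2 x) := by
  have hc := log_contOn x hx
  exact ContinuousOn.div ((hc.pow 2).add (continuousOn_const.mul hc)).neg
    ((continuousOn_id.mul (hc.pow 2)).pow 2) (fun t ht => pow_ne_zero 2 (gw_ne x hx t ht))

/-- the integral -/
noncomputable def RR (x : ℝ) : ℝ := ∫ t in (2:ℝ)..x, (Chebyshev.theta t - t) * gw t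

lemma theta_ii (a b : ℝ) : IntervalIntegrable Chebyshev.theta MeasureTheory.volume a b :=
  Chebyshev.theta_mono.intervalIntegrable

lemma main_id (x : ℝ) (hx : 2 ≤ x) : ((primePi x : ℝ) - Li x) * Real.log x =
    Chebyshev.theta x - x + Real.log x * (2 / Real.log 2 + RR x) := by
  rw [primePi_eq x (by linarith), Chebyshev.primeCounting_eq_theta_div_log_add_integral hx, Li_eq x hx]
  have e : RR x = (∫ t in (2:ℝ)..x, Chebyshev.theta t / (t * Real.log t ^ 2)) - ∫ t in (2:ℝ)..x, 1 / Real.log t ^ 2 := by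
    unfold RR
    rw [← intervalIntegral.integral_sub]
    · refine intervalIntegral.integral_congr fun t ht => ?_
      have := gw_ne x hx t ht
      have h0 : t ≠ 0 := left_ne_zero_of_mul this
      have h1 := right_ne_zero_of_mul this
      simp only [gw]
      field_simp
    · have := (theta_ii 2 x).mul_continuousOn (gw_cont x hx)
      refine this.congr fun t _ => ?_
      simp only [gw]; ring
    · exact Chebyshev.intervalIntegrable_one_div_log_sq (by norm_num) (by linarith)
  have hl : Real.log x ≠ 0 := by linarith [log_pos_of hx]
  rw [e]
  field_simp
  ring

lemma psi_right (y : ℝ) (hy : 0 ≤ y) : ContinuousWithinAt (fun t => (Chebyshev.psi t - t) * t ^ 0) (Ioi y) y := by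
  have h : ContinuousWithinAt Chebyshev.psi (Ioi y) y := by
    have : Chebyshev.psi =ᶠ[nhdsWithin y (Ioi y)] fun _ => Chebyshev.psi y := by
      have hm : Ioo y (⌊y⌋₊ + 1 : ℝ) ∈ nhdsWithin y (Ioi y) := Ioo_mem_nhdsGT (Nat.lt_floor_add_one y)
      filter_upwards [hm] with z hz
      have : ⌊z⌋₊ = ⌊y⌋₊ := by
        rw [Nat.floor_eq_iff (by linarith [hz.1])]
        exact ⟨(Nat.floor_le hy).trans hz.1.le, hz.2⟩
      unfold Chebyshev.psi
      rw [this]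
    exact (continuousWithinAt_const.congr_of_eventuallyEq this rfl)
  exact (h.sub continuousWithinAt_id).mul (continuousWithinAt_id.pow 0)

lemma J0_deriv (y : ℝ) (hy : 0 ≤ y) : HasDerivWithinAt (J 0) (Chebyshev.psi y - y) (Ioi y) y := by
  have h := intervalIntegral.integral_hasDerivWithinAt_right (s := Ici y) (t := Ioi y) (J_intble 0 1 y) ?_ (psi_right y hy)
  · have h2 := h.mono (Ioi_subset_Ici_self)
    simp only [pow_zero, mul_one] at h2
    unfold J
    simpa using h2
  · refine (Measurable.stronglyMeasurable ?_).stronglyMeasurableAtFilter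
    exact ((Chebyshev.psi_mono.measurable).sub measurable_id).mul (measurable_id.pow_const 0)

lemma J_cont (m : ℕ) : Continuous (J m) :=
  intervalIntegral.continuous_primitive (fun a b => J_intble m a b) 1

lemma parts_id (x : ℝ) (hx : 2 ≤ x) : ∫ t in (2:ℝ)..x, gw t * (Chebyshev.psi t - t) =
    gw x * J 0 x - gw 2 * J 0 2 - ∫ t in (2:ℝ)..x, gw' t * J 0 t := by
  refine intervalIntegral.integral_mul_deriv_eq_deriv_mul_of_hasDeriv_right (gw_cont x hx)
    (J_cont 0).continuousOn ?_ ?_ (gw'_cont x hx).intervalIntegrable ?_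
  · intro t ht
    rw [min_eq_left hx] at ht
    exact (gw_deriv t ht.1.le).hasDerivWithinAt
  · intro t ht
    rw [min_eq_left hx] at ht
    exact J0_deriv t (by linarith [ht.1])
  · have := J_intble 0 2 x
    simpa using this

/-- comparison integrand -/
noncomputable def hh (y : ℝ) : ℝ := 1 / (√y * Real.log y ^ 2)

lemma hh_cont (a b : ℝ) (ha : 2 ≤ a) (hb : 2 ≤ b) : ContinuousOn hh (uIcc a b) := by
  have hm : ∀ t ∈ uIcc a b, 2 ≤ t := fun t ht => (le_inf ha hb).trans ht.1
  refine continuousOn_const.div (Real.continuous_sqrt.continuousOn.mul (ContinuousOn.pow ?_ 2)) ?_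
  · intro t ht
    exact (Real.continuousAt_log (by linarith [hm t ht])).continuousWithinAt
  · intro t ht
    have h1 : 0 < √t := Real.sqrt_pos.mpr (by linarith [hm t ht])
    have h2 := log_pos_of (hm t ht)
    positivity

lemma Q_le (a b : ℝ) (ha : 2 ≤ a) (hab : a ≤ b) : ∫ t in a..b, hh t ≤ 2 * √b / Real.log a ^ 2 := by
  have hla := log_pos_of ha
  have hd : ∀ t ∈ uIcc a b, HasDerivAt (fun t => 2 * √t / Real.log a ^ 2) (1 / √t * (1 / Real.log a ^ 2)) t := by
    intro t ht
    rw [uIcc_of_le hab] at ht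
    have ht0 : t ≠ 0 := by linarith [ht.1]
    have hs : 0 < √t := Real.sqrt_pos.mpr (by linarith [ht.1])
    refine (((Real.hasDerivAt_sqrt ht0).const_mul 2).div_const (Real.log a ^ 2)).congr_deriv ?_
    field_simp
  have hi : IntervalIntegrable (fun t => 1 / √t * (1 / Real.log a ^ 2)) MeasureTheory.volume a b := by
    refine ContinuousOn.intervalIntegrable (ContinuousOn.mul (continuousOn_const.div Real.continuous_sqrt.continuousOn ?_) continuousOn_const)
    intro t ht
    rw [uIcc_of_le hab] at ht
    exact (Real.sqrt_pos.mpr (by linarith [ht.1])).ne'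
  have h := intervalIntegral.integral_eq_sub_of_hasDerivAt hd hi
  have h2 : ∫ t in a..b, hh t ≤ ∫ t in a..b, 1 / √t * (1 / Real.log a ^ 2) := by
    refine intervalIntegral.integral_mono_on hab (hh_cont a b ha (ha.trans hab)).intervalIntegrable hi ?_
    intro t ht
    unfold hh
    rw [← one_div_mul_one_div]
    have := Real.log_le_log (by linarith) ht.1
    gcongr
  have h3 : 0 ≤ 2 * √a / Real.log a ^ 2 := by positivity
  linarith

lemma psi_sub_theta_17 (x : ℝ) (hx : 1 ≤ x) : Chebyshev.psi x - Chebyshev.theta x ≤ 17 * √x := by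
  have hl : Real.log 4 ≤ 1.4 := by
    rw [show (4:ℝ) = 2 ^ 2 by norm_num, Real.log_pow]
    have := Real.log_two_lt_d9
    push_cast; linarith
  have (n : ℝ) (hn : 2 ≤ n) : Chebyshev.psi (x ^ n⁻¹) ≤ 5.4 * √x := by
    have h1 := Chebyshev.psi_le_const_mul_self (x := x ^ n⁻¹) (by positivity)
    have h2 : x ^ n⁻¹ ≤ √x := by
      rw [Real.sqrt_eq_rpow]
      apply Real.rpow_le_rpow_of_exponent_le hx
      rw [one_div]; gcongr
    have h3 : 0 ≤ x ^ n⁻¹ := by positivity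
    nlinarith
  have h0 := Real.sqrt_nonneg x
  linarith [Chebyshev.psi_sub_theta_le_psi_add_psi_add_psi x, this 2 (le_refl _), this 3 (by norm_num),
    this 5 (by norm_num)]

lemma J0_bd (hRH : RiemannHypothesis) (x : ℝ) (hx : 1 ≤ x) : |J 0 x| ≤ x * (10 * √x) := by
  have h := J_bd hRH 0 (trivOK_odd 0) x hx
  have hs : 1 ≤ √x := by rw [Real.one_le_sqrt]; exact hx
  simp only [zero_add, pow_one] at h
  refine h.trans (mul_le_mul_of_nonneg_left ?_ (by linarith))
  push_cast; linarith

lemma sqrt_div_self_mul (y : ℝ) (hy : 2 ≤ y) : √y * gw y = hh y := by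
  unfold gw hh
  have hs : 0 < √y := Real.sqrt_pos.mpr (by linarith)
  have hl := log_pos_of hy
  have h2 : √y * √y = y := Real.mul_self_sqrt (by linarith)
  rw [← h2]
  field_simp
  rw [Real.sqrt_sq hs.le]

lemma gw'_bd (y : ℝ) (hy : 2 ≤ y) : |gw' y| * y ≤ 4 * gw y := by
  have hl := log_pos_of hy
  have hy0 : 0 < y := by linarith
  unfold gw' gw
  rw [abs_div, abs_neg, abs_of_pos (a := Real.log y ^ 2 + 2 * Real.log y) (by positivity),
    abs_of_pos (a := (y * Real.log y ^ 2) ^ 2) (by positivity), div_mul_eq_mul_div, mul_one_div,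
    div_le_div_iff₀ (by positivity) (by positivity)]
  have : Real.log y ^ 2 + 2 * Real.log y ≤ 4 * Real.log y ^ 2 := by nlinarith
  have h3 : 0 ≤ y ^ 2 * Real.log y ^ 2 := by positivity
  have := mul_le_mul_of_nonneg_right this h3
  nlinarith

lemma RR_bd1 (hRH : RiemannHypothesis) (x : ℝ) (hx : 2 ≤ x) :
    |RR x| ≤ 10 * √x / Real.log x ^ 2 + 32 + 57 * ∫ t in (2:ℝ)..x, hh t := by
  have hi := (hh_cont 2 x le_rfl hx).intervalIntegrable (μ := MeasureTheory.volume)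
  have hgc := gw_cont x hx
  have i1 : IntervalIntegrable (fun t => gw t * (Chebyshev.psi t - t)) MeasureTheory.volume 2 x :=
    ((psi_intervalIntegrable 2 x).sub (continuous_id.intervalIntegrable 2 x)).continuousOn_mul hgc
  have i2 : IntervalIntegrable (fun t => gw t * (Chebyshev.psi t - Chebyshev.theta t)) MeasureTheory.volume 2 x :=
    ((psi_intervalIntegrable 2 x).sub (theta_ii 2 x)).continuousOn_mul hgc
  have e : RR x = (∫ t in (2:ℝ)..x, gw t * (Chebyshev.psi t - t)) -
      ∫ t in (2:ℝ)..x, gw t * (Chebyshev.psi t - Chebyshev.theta t) := by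
    rw [← intervalIntegral.integral_sub i1 i2]
    unfold RR
    congr 1; funext t; ring
  have b2 : |∫ t in (2:ℝ)..x, gw t * (Chebyshev.psi t - Chebyshev.theta t)| ≤ ∫ t in (2:ℝ)..x, 17 * hh t := by
    rw [← Real.norm_eq_abs]
    refine intervalIntegral.norm_integral_le_of_norm_le hx (Eventually.of_forall fun t ht => ?_) (hi.const_mul _)
    have ht2 : 2 ≤ t := ht.1.le
    have hg : 0 ≤ gw t := by unfold gw; have := log_pos_of ht2; positivity
    have h1 := psi_sub_theta_17 t (by linarith)
    have h2 := Chebyshev.theta_le_psi t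
    rw [Real.norm_eq_abs, abs_mul, abs_of_nonneg hg, abs_of_nonneg (by linarith), ← sqrt_div_self_mul t ht2]
    nlinarith
  have b3 : |∫ t in (2:ℝ)..x, gw' t * J 0 t| ≤ ∫ t in (2:ℝ)..x, 40 * hh t := by
    rw [← Real.norm_eq_abs]
    refine intervalIntegral.norm_integral_le_of_norm_le hx (Eventually.of_forall fun t ht => ?_) (hi.const_mul _)
    have ht2 : 2 ≤ t := ht.1.le
    have h1 := J0_bd hRH t (by linarith)
    have h2 := gw'_bd t ht2
    rw [Real.norm_eq_abs, abs_mul, ← sqrt_div_self_mul t ht2]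
    calc |gw' t| * |J 0 t| ≤ |gw' t| * (t * (10 * √t)) := by gcongr
      _ = (|gw' t| * t) * (10 * √t) := by ring
      _ ≤ (4 * gw t) * (10 * √t) := by gcongr
      _ = _ := by ring
  rw [intervalIntegral.integral_const_mul] at b2 b3
  have b4 : ∀ y, 2 ≤ y → |gw y * J 0 y| ≤ 10 * √y / Real.log y ^ 2 := by
    intro y hy
    have hl := log_pos_of hy
    have hg : 0 ≤ gw y := by unfold gw; positivity
    have h1 := J0_bd hRH y (by linarith)
    rw [abs_mul, abs_of_nonneg hg]
    calc gw y * |J 0 y| ≤ gw y * (y * (10 * √y)) := by gcongr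
      _ = _ := by unfold gw; field_simp
  have b5 : |gw 2 * J 0 2| ≤ 32 := by
    refine (b4 2 le_rfl).trans ?_
    have hl := log_pos_of (le_refl 2)
    have hs : √2 ≤ 1.42 := by
      rw [Real.sqrt_le_left (by norm_num)]; norm_num
    rw [div_le_iff₀ (by positivity)]
    nlinarith
  have b6 := b4 x hx
  rw [e, parts_id x hx]
  rw [abs_le] at b2 b3 b5 b6 ⊢
  constructor <;> linarith [b2.1, b2.2, b3.1, b3.2, b5.1, b5.2, b6.1, b6.2]

/-- basic size facts for large `x` -/
lemma size_facts (x : ℝ) (hx : 0 < x) (hl : 1000000 ≤ Real.log x) :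
    Real.log x ^ 2 ≤ √√x ∧ √√x * √√x = √x ∧ √x * √x = x ∧ 1 ≤ x ∧ 10 ^ 12 ≤ √√x := by
  have h1 : √√x = Real.exp (Real.log x / 4) := by
    rw [Real.sqrt_eq_rpow, Real.sqrt_eq_rpow, ← Real.rpow_mul hx.le, Real.rpow_def_of_pos hx]
    congr 1; ring
  have hx1 : 1 ≤ x := by
    by_contra h
    have := Real.log_neg hx (by linarith)
    linarith
  have h2 := Real.pow_div_factorial_le_exp (Real.log x / 4) (by linarith) 3
  have h3 : Real.log x ^ 2 ≤ √√x := by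
    rw [h1]
    refine le_trans ?_ h2
    norm_num [Nat.factorial]
    have : 0 ≤ Real.log x ^ 2 := by positivity
    nlinarith
  refine ⟨h3, Real.mul_self_sqrt (Real.sqrt_nonneg _), Real.mul_self_sqrt hx.le, hx1, ?_⟩
  refine le_trans ?_ h3
  nlinarith

theorem main_approx (hRH : RiemannHypothesis) (x : ℝ) (hx : 0 < x) (hl : 1000000 ≤ Real.log x) :
    |((primePi x : ℝ) - Li x) * Real.log x - (Chebyshev.theta x - x)| ≤ 0.001 * √x := by
  obtain ⟨s1, s2, s3, s4, s5⟩ := size_facts x hx hl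
  set s := √√x with hs
  set ℓ := Real.log x with hℓ
  have hsx : 2 ≤ √x := by nlinarith
  have hx2 : 2 ≤ x := by nlinarith
  have hsle : √x ≤ x := by nlinarith
  rw [main_id x hx2, add_sub_cancel_left]
  have hR := RR_bd1 hRH x hx2
  have hQ1 := Q_le 2 √x le_rfl hsx
  have hQ2 := Q_le √x x hsx hsle
  have hQ : ∫ t in (2:ℝ)..x, hh t = (∫ t in (2:ℝ)..√x, hh t) + ∫ t in √x..x, hh t :=
    (intervalIntegral.integral_add_adjacent_intervals
      (hh_cont _ _ le_rfl hsx).intervalIntegrable (hh_cont _ _ hsx hx2).intervalIntegrable).symm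
  have hlog : Real.log √x = ℓ / 2 := Real.log_sqrt hx.le
  rw [hlog] at hQ2
  have hl2 := log_pos_of (le_refl 2)
  set F := √x / ℓ ^ 2 with hF
  have hℓ0 : 0 < ℓ := by linarith
  have hsF : s ≤ F := by
    rw [hF, le_div_iff₀ (by positivity), ← s2]
    nlinarith
  have q1 : 2 * √√x / Real.log 2 ^ 2 ≤ 4.3 * s := by
    rw [div_le_iff₀ (by positivity)]
    have : (0.47:ℝ) ≤ Real.log 2 ^ 2 := by nlinarith
    nlinarith
  have q2 : 2 * √x / (ℓ / 2) ^ 2 = 8 * F := by rw [hF]; field_simp; ring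
  have q3 : 10 * √x / ℓ ^ 2 = 10 * F := by rw [hF]; ring
  have h2log : 2 / Real.log 2 ≤ 3 := by rw [div_le_iff₀ (by linarith)]; linarith
  have h2log' : 0 ≤ 2 / Real.log 2 := by positivity
  have hRF : |2 / Real.log 2 + RR x| ≤ 753 * F := by
    refine (abs_add_le _ _).trans ?_
    rw [abs_of_nonneg h2log']
    rw [q2] at hQ2
    rw [q3, hQ] at hR
    linarith
  rw [abs_mul, abs_of_pos hℓ0]
  calc ℓ * |2 / Real.log 2 + RR x| ≤ ℓ * (753 * F) := by gcongr
    _ = 753 / ℓ * √x := by rw [hF]; field_simp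
    _ ≤ _ := by
      apply mul_le_mul_of_nonneg_right _ (by linarith)
      rw [div_le_iff₀ hℓ0]; linarith

lemma psi_theta_upper (x : ℝ) (hx : 0 < x) (hl : 1000000 ≤ Real.log x) :
    Chebyshev.psi x - Chebyshev.theta x ≤ 1.388 * √x := by
  obtain ⟨s1, s2, s3, s4, s5⟩ := size_facts x hx hl
  set s := √√x with hs
  set ℓ := Real.log x with hℓ
  have hsx : 1 ≤ √x := by nlinarith
  have hl4 : Real.log 4 ≤ 1.3863 := by
    rw [show (4:ℝ) = 2 ^ 2 by norm_num, Real.log_pow]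
    have := Real.log_two_lt_d9
    push_cast; linarith
  have h := Chebyshev.psi_sub_theta_le_psi_add_psi_add_psi x
  have e2 : x ^ (2:ℝ)⁻¹ = √x := by rw [Real.sqrt_eq_rpow, one_div]
  rw [e2] at h
  have a1 := Chebyshev.psi_sub_theta_le hsx
  have a2 := Chebyshev.theta_le_log4_mul_x (x := √x) (by linarith)
  rw [Real.log_sqrt hx.le] at a1
  have a3 : s * ℓ ≤ 0.000001 * √x := by
    rw [← s2]
    have : ℓ ≤ 0.000001 * s := by nlinarith
    nlinarith
  have e3 : x ^ (3:ℝ)⁻¹ ≤ 0.00001 * √x := by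
    have : x ^ (3:ℝ)⁻¹ * Real.exp (ℓ / 6) = √x := by
      rw [Real.sqrt_eq_rpow, Real.rpow_def_of_pos hx, Real.rpow_def_of_pos hx, ← Real.exp_add]
      congr 1; rw [← hℓ]; ring
    have h6 := Real.add_one_le_exp (ℓ / 6)
    have hp : 0 < x ^ (3:ℝ)⁻¹ := by positivity
    nlinarith
  have e5 : x ^ (5:ℝ)⁻¹ ≤ x ^ (3:ℝ)⁻¹ := Real.rpow_le_rpow_of_exponent_le s4 (by norm_num)
  have a5 := Chebyshev.psi_le_const_mul_self (x := x ^ (3:ℝ)⁻¹) (by positivity)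
  have a6 := Chebyshev.psi_le_const_mul_self (x := x ^ (5:ℝ)⁻¹) (by positivity)
  have hp5 : 0 < x ^ (5:ℝ)⁻¹ := by positivity
  have hl0 : 0 ≤ Real.log 4 := Real.log_nonneg (by norm_num)
  have a7 : (Real.log 4 + 4) * x ^ (3:ℝ)⁻¹ ≤ 5.4 * (0.00001 * √x) := by
    apply mul_le_mul _ e3 (by linarith) (by norm_num); linarith
  have a8 : (Real.log 4 + 4) * x ^ (5:ℝ)⁻¹ ≤ 5.4 * (0.00001 * √x) := by
    apply mul_le_mul _ (e5.trans e3) (by linarith) (by norm_num); linarith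
  have a9 : Real.log 4 * √x ≤ 1.3863 * √x := by gcongr
  have a10 : 2 * √√x * (ℓ / 2) = s * ℓ := by rw [← hs]; ring
  rw [← hℓ, a10] at a1
  linarith

lemma psi_theta_lower (x : ℝ) (hx : 0 < x) (hl : 1000000 ≤ Real.log x) :
    0.69 * √x ≤ Chebyshev.psi x - Chebyshev.theta x := by
  obtain ⟨s1, s2, s3, s4, s5⟩ := size_facts x hx hl
  set s := √√x with hs
  set ℓ := Real.log x with hℓ
  have hsx : 1 ≤ √x := by nlinarith
  have h := Chebyshev.psi_sub_theta_ge_psi_add_psi_add_psi hx.le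
  have e2 : x ^ (2:ℝ)⁻¹ = √x := by rw [Real.sqrt_eq_rpow, one_div]
  rw [e2] at h
  have p1 := Chebyshev.psi_nonneg (x ^ (3:ℝ)⁻¹)
  have p2 := Chebyshev.psi_nonneg (x ^ (7:ℝ)⁻¹)
  have p3 := Chebyshev.psi_ge' (x := √x) (by linarith)
  have hbig : 10 ^ 12 * s ≤ √x := by rw [← s2]; nlinarith
  have hlog : Real.log (√x + 2) ≤ ℓ := by
    apply Real.log_le_log (by linarith)
    nlinarith
  have hl2 := Real.log_two_gt_d9
  have hl3 := Real.log_two_lt_d9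
  have hℓs : ℓ ≤ s := by nlinarith
  nlinarith

end SP

namespace SP

/-- on the window, the argument is still large -/
lemma win_facts (x : ℝ) (hx : 0 < x) (hl : 2000000 ≤ Real.log x) (t : ℝ) (ht : t ∈ Icc (x/4) x) :
    0 < t ∧ 1000000 ≤ Real.log t := by
  have h0 : 0 < t := by have := ht.1; linarith
  refine ⟨h0, ?_⟩
  have h1 : Real.log (x/4) ≤ Real.log t := Real.log_le_log (by positivity) ht.1
  rw [Real.log_div hx.ne' (by norm_num)] at h1
  have h4 : Real.log 4 ≤ 4 := by
    have := Real.log_le_sub_one_of_pos (show (0:ℝ) < 4 by norm_num)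
    linarith
  linarith

lemma sqrt_quarter (x : ℝ) : √(x/4) = √x/2 := by
  rw [Real.sqrt_div' x (by norm_num)]
  rw [show (4:ℝ) = 2^2 by norm_num, Real.sqrt_sq (by norm_num)]

lemma J_diff (m : ℕ) (a b : ℝ) : J m b - J m a = ∫ t in a..b, (Chebyshev.psi t - t) * t ^ m := by
  unfold J
  rw [intervalIntegral.integral_interval_sub_left (J_intble m 1 b) (J_intble m 1 a)]

theorem neg_point (hRH : RiemannHypothesis) (x : ℝ) (hx : 0 < x) (hl : 2000000 ≤ Real.log x) :
    ∃ t ∈ Icc (x/4) x, (primePi t : ℝ) - Li t < 0 := by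
  by_contra! hc
  obtain ⟨-, hs2, hs1, hx1, hbig⟩ := size_facts x hx (by linarith)
  have hx4 : 0 < x/4 := by positivity
  obtain ⟨-, hl4⟩ := win_facts x hx hl (x/4) ⟨le_rfl, by linarith⟩
  obtain ⟨-, -, -, hx41, -⟩ := size_facts (x/4) hx4 hl4
  have hlow : ∀ t ∈ Icc (x/4) x, 0.34 * √x ≤ (Chebyshev.psi t - t) * t ^ 0 := by
    intro t ht
    obtain ⟨h0, h1⟩ := win_facts x hx hl t ht
    have hp := hc t ht
    have a1 := abs_le.mp (main_approx hRH t h0 h1)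
    have a2 := psi_theta_lower t h0 h1
    have a3 : 0 ≤ ((primePi t : ℝ) - Li t) * Real.log t := mul_nonneg hp (by linarith)
    have a4 : √(x/4) ≤ √t := Real.sqrt_le_sqrt ht.1
    rw [sqrt_quarter] at a4
    rw [pow_zero, mul_one]
    linarith [a1.1, a1.2]
  have hinteg : ∫ t in (x/4)..x, 0.34 * √x ≤ ∫ t in (x/4)..x, (Chebyshev.psi t - t) * t ^ 0 :=
    intervalIntegral.integral_mono_on (by linarith) (by simp) (J_intble 0 _ _) hlow
  rw [intervalIntegral.integral_const, ← J_diff, smul_eq_mul] at hinteg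
  have htr : TrivOK ((0 + 1 : ℕ) : ℝ) := trivOK_odd 0
  have b1 := abs_le.mp (J_bd hRH 0 htr x hx1)
  have b2 := abs_le.mp (J_bd hRH 0 htr (x/4) hx41)
  rw [sqrt_quarter] at b2
  norm_num at b1 b2
  have hsq : 10^12 ≤ √x := by nlinarith
  nlinarith [b1.2, b2.1, mul_le_mul_of_nonneg_left hsq hx.le]

theorem pos_point (hRH : RiemannHypothesis) (x : ℝ) (hx : 0 < x) (hl : 2000000 ≤ Real.log x)
    (hgood : ∀ ρ : ℂ, xi ρ = 0 → |ρ.im| ≤ 50000 →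
      ‖Complex.exp (Complex.I * ρ.im * Real.log x) - 1‖ ≤ 0.0001) :
    ∃ t ∈ Icc (x/4) x, 0 < (primePi t : ℝ) - Li t := by
  by_contra! hc
  obtain ⟨-, hs2, hs1, hx1, hbig⟩ := size_facts x hx (by linarith)
  have hx4 : 0 < x/4 := by positivity
  obtain ⟨-, hl4⟩ := win_facts x hx hl (x/4) ⟨le_rfl, by linarith⟩
  obtain ⟨-, -, -, hx41, -⟩ := size_facts (x/4) hx4 hl4
  have hup : ∀ t ∈ Icc (x/4) x, (Chebyshev.psi t - t) * t ^ 998 ≤ 1.4 * √x * t ^ 998 := by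
    intro t ht
    obtain ⟨h0, h1⟩ := win_facts x hx hl t ht
    have hp := hc t ht
    have a1 := abs_le.mp (main_approx hRH t h0 h1)
    have a2 := psi_theta_upper t h0 h1
    have a3 : ((primePi t : ℝ) - Li t) * Real.log t ≤ 0 :=
      mul_nonpos_of_nonpos_of_nonneg hp (by linarith)
    have a4 : √t ≤ √x := Real.sqrt_le_sqrt ht.2
    refine mul_le_mul_of_nonneg_right ?_ (by positivity)
    linarith [a1.1, a1.2]
  have hinteg : ∫ t in (x/4)..x, (Chebyshev.psi t - t) * t ^ 998 ≤
      ∫ t in (x/4)..x, 1.4 * √x * t ^ 998 :=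
    intervalIntegral.integral_mono_on (by linarith) (J_intble 998 _ _)
      (Continuous.intervalIntegrable (by fun_prop) _ _) hup
  rw [intervalIntegral.integral_const_mul, integral_pow, ← J_diff] at hinteg
  have htr : TrivOK ((998 + 1 : ℕ) : ℝ) := trivOK_odd 499
  have b2 := (abs_le.mp (J_bd hRH 998 htr (x/4) hx41)).2
  rw [sqrt_quarter] at b2
  have b1 := J_good hRH x hx1 hgood
  have hsq : 10^24 ≤ √x := by nlinarith
  have e1 : (998 + 1 : ℕ) = 999 := rfl
  rw [e1] at b2 hinteg
  have e2 : (x/4)^999 ≤ x^999 * (1/999/1000) := by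
    rw [div_pow, div_eq_mul_inv]
    refine mul_le_mul_of_nonneg_left ?_ (by positivity)
    have : (4:ℝ)^12 ≤ 4^999 := pow_le_pow_right₀ (by norm_num) (by norm_num)
    rw [inv_le_comm₀ (by positivity) (by norm_num)]
    refine le_trans ?_ this
    norm_num
  have hX : 0 < x^999 := by positivity
  have hY : 0 < (x/4)^999 := by positivity
  generalize x^999 = X at *
  generalize (x/4)^999 = Y at *
  generalize √x = s at *
  push_cast at b2 hinteg
  have c1 : Y * (0.2 * (s/2) + (998 + 9)) ≤ X * (1/999/1000) * (0.2 * (s/2) + (998 + 9)) :=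
    mul_le_mul_of_nonneg_right e2 (by linarith)
  have c2 : 1.4 * s * ((X - Y) / (998+1)) ≤ 1.4 * s * (X / 999) := by
    refine mul_le_mul_of_nonneg_left ?_ (by linarith)
    rw [div_le_div_iff₀ (by norm_num) (by norm_num)]
    linarith
  have c3 : X * (1.9 * s - 1100000) ≤ 999 * (X * (1/999/1000) * (0.2 * (s/2) + (998 + 9)) + 1.4 * s * (X / 999)) := by
    linarith
  have c4 : X * 10^24 ≤ X * s := mul_le_mul_of_nonneg_left hsq hX.le
  nlinarith
end SP

namespace SP

lemma low_zeros (hRH : RiemannHypothesis) : ∃ Z : Finset ℂ, (Z.card : ℝ) ≤ 460000 ∧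
    ∀ ρ : ℂ, xi ρ = 0 → |ρ.im| ≤ 50000 → ρ ∈ Z := by
  classical
  refine ⟨(ZR xi 50001).filter (fun ρ => |ρ.im| ≤ 50000), ?_, ?_⟩
  · have h := count_le hRH 50000 (by norm_num) ((ZR xi 50001).filter (fun ρ => |ρ.im| ≤ 50000)) (by
      intro ρ hρ
      rw [Finset.mem_filter, mem_ZR xi xi_diff xi_zero_ne] at hρ
      exact ⟨hρ.1.1, hρ.2⟩)
    have := XX_big_le
    linarith
  · intro ρ h0 h1
    rw [Finset.mem_filter, mem_ZR xi xi_diff xi_zero_ne]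
    refine ⟨⟨h0, ?_⟩, h1⟩
    have hre := xi_zero_re hRH ρ h0
    have := Complex.norm_le_abs_re_add_abs_im ρ
    rw [hre] at this
    rw [abs_of_pos (by norm_num : (0:ℝ) < 1/2)] at this
    linarith

/-- simultaneous approximation by the box principle, many times -/
lemma dirichlet_many (Z : Finset ℂ) (L : ℝ) (q : ℕ) (hq : 0 < q) (N : ℕ) :
    ∃ k : ℕ → ℕ, (∀ i ≤ N, 1 ≤ k i ∧ k i ≤ q ^ Z.card * (N + 1)) ∧ (∀ i < N, k i < k (i+1)) ∧
      ∀ i ≤ N, ∀ ρ ∈ Z, ∃ n : ℤ, |(k i : ℝ) * (L * ρ.im / (2 * π)) - n| ≤ 1 / q := by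
  classical
  have hq' : (0:ℝ) < q := by exact_mod_cast hq
  set M := q ^ Z.card * (N + 1) with hM
  let α : ℂ → ℝ := fun ρ => L * ρ.im / (2 * π)
  let f : ℕ → (Z → Fin q) := fun k ρ => ⟨⌊(q:ℝ) * Int.fract ((k:ℝ) * α ρ)⌋₊, by
    rw [Nat.floor_lt (by have := Int.fract_nonneg ((k:ℝ) * α ρ); positivity)]
    have := Int.fract_lt_one ((k:ℝ) * α ρ)
    nlinarith⟩
  have hcard : (Finset.univ : Finset (Z → Fin q)).card * (N + 1) < (Finset.range (M + 1)).card := by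
    rw [Finset.card_univ, Finset.card_range, Fintype.card_fun, Fintype.card_fin, Fintype.card_coe]
    omega
  obtain ⟨y, -, hy⟩ := Finset.exists_lt_card_fiber_of_mul_lt_card_of_maps_to
    (f := f) (s := Finset.range (M+1)) (t := Finset.univ) (fun _ _ => Finset.mem_univ _) hcard
  set F := (Finset.range (M+1)).filter (fun k => f k = y) with hF
  obtain ⟨F', hF', hc⟩ := Finset.exists_subset_card_eq (show N + 2 ≤ F.card by omega)
  let e := F'.orderEmbOfFin hc
  have hmem : ∀ i, e i ∈ F := fun i => hF' (F'.orderEmbOfFin_mem hc i)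
  have hmono : ∀ i j : Fin (N+2), i < j → e i < e j := fun i j h => e.strictMono h
  let k : ℕ → ℕ := fun i => if h : i + 1 < N + 2 then e ⟨i+1, h⟩ - e ⟨0, by omega⟩ else 0
  have hk : ∀ i (hi : i ≤ N), k i = e ⟨i+1, by omega⟩ - e ⟨0, by omega⟩ := by
    intro i hi
    have h : i + 1 < N + 2 := by omega
    simp only [k, h, dite_true]
  refine ⟨k, ?_, ?_, ?_⟩
  · intro i hi
    rw [hk i hi]
    have h1 := hmono ⟨0, by omega⟩ ⟨i+1, by omega⟩ (by simp [Fin.lt_def])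
    have h2 := hmem ⟨i+1, by omega⟩
    rw [hF, Finset.mem_filter, Finset.mem_range] at h2
    omega
  · intro i hi
    rw [hk i hi.le, hk (i+1) hi]
    have h1 := hmono ⟨0, by omega⟩ ⟨i+1, by omega⟩ (by simp [Fin.lt_def])
    have h2 := hmono ⟨i+1, by omega⟩ ⟨i+1+1, by omega⟩ (by simp [Fin.lt_def])
    omega
  · intro i hi ρ hρ
    rw [hk i hi]
    have h1 := hmono ⟨0, by omega⟩ ⟨i+1, by omega⟩ (by simp [Fin.lt_def])
    have h2 := hmem ⟨i+1, by omega⟩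
    have h3 := hmem ⟨0, by omega⟩
    generalize e ⟨i+1, by omega⟩ = a at *
    generalize e ⟨0, by omega⟩ = b at *
    rw [hF, Finset.mem_filter] at h2 h3
    have h4 : f a ⟨ρ, hρ⟩ = f b ⟨ρ, hρ⟩ := by rw [h2.2, h3.2]
    have h5 : ⌊(q:ℝ) * Int.fract ((a:ℝ) * α ρ)⌋₊ = ⌊(q:ℝ) * Int.fract ((b:ℝ) * α ρ)⌋₊ :=
      congrArg Fin.val h4
    refine ⟨⌊(a:ℝ) * α ρ⌋ - ⌊(b:ℝ) * α ρ⌋, ?_⟩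
    rw [Nat.cast_sub h1.le]
    push_cast
    have e1 : ((a:ℝ) - b) * (L * ρ.im / (2 * π)) - ((⌊(a:ℝ) * α ρ⌋ : ℝ) - ⌊(b:ℝ) * α ρ⌋) =
        Int.fract ((a:ℝ) * α ρ) - Int.fract ((b:ℝ) * α ρ) := by
      rw [Int.fract, Int.fract]
      simp only [α]
      ring
    rw [e1]
    have pa : 0 ≤ (q:ℝ) * Int.fract ((a:ℝ) * α ρ) := mul_nonneg hq'.le (Int.fract_nonneg _)
    have pb : 0 ≤ (q:ℝ) * Int.fract ((b:ℝ) * α ρ) := mul_nonneg hq'.le (Int.fract_nonneg _)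
    have a1 := Nat.floor_le pa
    have a2 := Nat.lt_floor_add_one ((q:ℝ) * Int.fract ((a:ℝ) * α ρ))
    have b1 := Nat.floor_le pb
    have b2 := Nat.lt_floor_add_one ((q:ℝ) * Int.fract ((b:ℝ) * α ρ))
    rw [h5] at a1 a2
    rw [le_div_iff₀ hq', ← abs_of_pos hq', ← abs_mul, abs_le]
    constructor <;> linarith

lemma near_one (γ u : ℝ) (n : ℤ) (h : |u * γ / (2 * π) - n| ≤ 1 / 100000) :
    ‖Complex.exp (Complex.I * γ * u) - 1‖ ≤ 0.0001 := by
  have hpi := Real.pi_pos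
  have hpi2 := Real.pi_lt_four
  have e1 : Complex.exp (Complex.I * γ * u) =
      Complex.exp (Complex.I * ((2 * π * (u * γ / (2 * π) - n) : ℝ) : ℂ)) := by
    rw [← Complex.exp_periodic.int_mul n (Complex.I * ((2 * π * (u * γ / (2 * π) - n) : ℝ) : ℂ))]
    congr 1
    have : (π:ℂ) ≠ 0 := by exact_mod_cast hpi.ne'
    push_cast
    field_simp
    ring
  rw [e1]
  refine (Real.norm_exp_I_mul_ofReal_sub_one_le).trans ?_
  rw [Real.norm_eq_abs, abs_mul, abs_of_pos (by positivity)]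
  have : 2 * π * |u * γ / (2 * π) - n| ≤ 2 * π * (1/100000) :=
    mul_le_mul_of_nonneg_left h (by positivity)
  have h3 := Real.pi_lt_d2
  linarith

lemma size_bound (n : ℕ) (hn : (n:ℝ) ≤ 460000) :
    ((100000 ^ n : ℕ) : ℝ) * 100000000 < Real.exp (Real.exp 16.7) := by
  have h0 : (2.7:ℝ) < Real.exp 1 := by have := Real.exp_one_gt_d9; linarith
  have h1 : (100000:ℝ) ≤ Real.exp 12 := by
    have : Real.exp 12 = Real.exp 1 ^ 12 := by rw [← Real.exp_nat_mul]; norm_num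
    rw [this]
    have := pow_le_pow_left₀ (by norm_num) h0.le 12
    refine le_trans ?_ this
    norm_num
  have h2 : (7000000:ℝ) ≤ Real.exp 16.7 := by
    have h3 : Real.exp 16 = Real.exp 1 ^ 16 := by rw [← Real.exp_nat_mul]; norm_num
    have h4 := pow_le_pow_left₀ (by norm_num) h0.le 16
    have h5 : Real.exp 16 ≤ Real.exp 16.7 := Real.exp_le_exp.mpr (by norm_num)
    have h6 : (7000000:ℝ) ≤ 2.7 ^ 16 := by norm_num
    linarith
  have h3 : (100000:ℝ) ^ n ≤ Real.exp 5520000 := by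
    refine (pow_le_pow_left₀ (by norm_num) h1 n).trans ?_
    rw [← Real.exp_nat_mul]
    apply Real.exp_le_exp.mpr
    linarith
  have h4 : (100000000:ℝ) ≤ Real.exp 24 := by
    have : Real.exp 24 = Real.exp 12 * Real.exp 12 := by rw [← Real.exp_add]; norm_num
    rw [this]
    nlinarith
  push_cast
  calc (100000:ℝ) ^ n * 100000000 ≤ Real.exp 5520000 * Real.exp 24 :=
        mul_le_mul h3 h4 (by norm_num) (Real.exp_pos _).le
    _ = Real.exp 5520024 := by rw [← Real.exp_add]; norm_num
    _ < Real.exp (Real.exp 16.7) := Real.exp_lt_exp.mpr (by linarith)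

end SP

theorem schlage_puchta_sign_changes (hRH : RiemannHypothesis) :
    ∀ T : ℝ, 2 < T → ∀ N : ℕ, (N : ℝ) ≤ Real.log T / Real.exp (Real.exp 16.7) - 1 →
      ∃ x : ℕ → ℝ, (∀ i ≤ N, 2 < x i ∧ x i < T) ∧ (∀ i < N, x i < x (i + 1)) ∧
        (∀ i < N, ((primePi (x i) : ℝ) - Li (x i)) * ((primePi (x (i + 1)) : ℝ) - Li (x (i + 1))) < 0) := by
  intro T hT N hN
  obtain ⟨Z, hZc, hZ⟩ := SP.low_zeros hRH
  obtain ⟨k, hk1, hk2, hk3⟩ := SP.dirichlet_many Z 100000000 100000 (by norm_num) N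
  have hsz := SP.size_bound Z.card hZc
  have hA := Real.exp_pos (Real.exp 16.7)
  have hlT : ((N:ℝ) + 1) * Real.exp (Real.exp 16.7) ≤ Real.log T := by
    rw [← le_div_iff₀ hA]; linarith
  have key : ∀ i, ∃ t : ℝ, i ≤ N → t ∈ Icc (Real.exp (k i * 100000000) / 4) (Real.exp (k i * 100000000)) ∧
      (if Even i then 0 < (primePi t : ℝ) - Li t else (primePi t : ℝ) - Li t < 0) := by
    intro i
    by_cases hi : i ≤ N
    · have hki : (1:ℝ) ≤ k i := by exact_mod_cast (hk1 i hi).1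
      have hl : 2000000 ≤ Real.log (Real.exp (k i * 100000000)) := by
        rw [Real.log_exp]; linarith
      by_cases hev : Even i
      · obtain ⟨t, ht, h⟩ := SP.pos_point hRH _ (Real.exp_pos (k i * 100000000)) hl (by
          intro ρ h0 h1
          obtain ⟨n, hn⟩ := hk3 i hi ρ (hZ ρ h0 h1)
          rw [Real.log_exp]
          apply SP.near_one ρ.im _ n
          rw [show (k i:ℝ) * 100000000 * ρ.im / (2 * π) = k i * (100000000 * ρ.im / (2 * π)) by ring]
          exact_mod_cast hn)
        exact ⟨t, fun _ => ⟨ht, by rw [if_pos hev]; exact h⟩⟩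
      · obtain ⟨t, ht, h⟩ := SP.neg_point hRH _ (Real.exp_pos (k i * 100000000)) hl
        exact ⟨t, fun _ => ⟨ht, by rw [if_neg hev]; exact h⟩⟩
    · exact ⟨0, fun h => absurd h hi⟩
  choose x hx using key
  refine ⟨x, ?_, ?_, ?_⟩
  · intro i hi
    obtain ⟨⟨h1, h2⟩, -⟩ := hx i hi
    obtain ⟨g1, g2⟩ := hk1 i hi
    have hki : (1:ℝ) ≤ k i := by exact_mod_cast g1
    constructor
    · have := Real.add_one_le_exp ((k i:ℝ) * 100000000)
      linarith
    · refine lt_of_le_of_lt h2 ?_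
      rw [← Real.lt_log_iff_exp_lt (by linarith)]
      refine lt_of_lt_of_le ?_ hlT
      have g3 : (k i : ℝ) ≤ ((100000 ^ Z.card : ℕ) : ℝ) * (N + 1) := by exact_mod_cast g2
      have g4 : (0:ℝ) < N + 1 := by positivity
      nlinarith
  · intro i hi
    obtain ⟨⟨-, h2⟩, -⟩ := hx i hi.le
    obtain ⟨⟨h1, -⟩, -⟩ := hx (i+1) hi
    refine lt_of_le_of_lt h2 (lt_of_lt_of_le ?_ h1)
    have g : (k i : ℝ) + 1 ≤ k (i+1) := by exact_mod_cast hk2 i hi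
    have e1 : Real.exp (k i * 100000000) * Real.exp 100000000 ≤ Real.exp (k (i+1) * 100000000) := by
      rw [← Real.exp_add]
      apply Real.exp_le_exp.mpr
      linarith
    have e2 := Real.add_one_le_exp (100000000:ℝ)
    have e3 := Real.exp_pos ((k i:ℝ) * 100000000)
    nlinarith
  · intro i hi
    obtain ⟨-, h1⟩ := hx i hi.le
    obtain ⟨-, h2⟩ := hx (i+1) hi
    by_cases hev : Even i
    · rw [if_pos hev] at h1
      rw [if_neg (by rw [Nat.even_add_one]; exact not_not.mpr hev)] at h2
      exact mul_neg_of_pos_of_neg h1 h2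
    · rw [if_neg hev] at h1
      rw [if_pos (by rw [Nat.even_add_one]; exact hev)] at h2
      exact mul_neg_of_neg_of_pos h1 h2
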